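/- arXiv:2208.02109 — 9 statements merged into one kernel-verified Lean document; each statement's English description precedes it below -/
import Mathlib

section
/- Let d ≥ 2 be an integer and let u ∈ U_d. Then for every k with 1 ≤ k ≤ d−1 one has p_k(u⁻¹) = (−1)^{k(d+1)} · p_{d−k}(u). In particular, if p_k(u) ≠ 0 for all 1 ≤ k ≤ d−1, then p_k(u⁻¹) ≠ 0 for all 1 ≤ k ≤ d−1; that is, the inversion map u ↦ u⁻¹ maps S_d into itself. -/
/-- `u` is upper triangular with all diagonal entries equal to `1`. -/
def IsUniUpper (d : ℕ) (u : Matrix (Fin d) (Fin d) ℝ) : Prop :=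
  (∀ i j : Fin d, (j : ℕ) < (i : ℕ) → u i j = 0) ∧ (∀ i : Fin d, u i i = 1)

/-- `p_k(u)`: the determinant of the upper-right `k × k` block of `u`
(rows `1,…,k` and columns `d−k+1,…,d`, in one-based indexing). -/
noncomputable def cornerMinor (d k : ℕ) (u : Matrix (Fin d) (Fin d) ℝ) : ℝ :=
  Matrix.det (Matrix.of fun i j : Fin k =>
    if h : (i : ℕ) < d ∧ d - k + (j : ℕ) < d then u ⟨i, h.1⟩ ⟨d - k + j, h.2⟩ else 0)

/-- `S_d = {u ∈ U_d : p_k(u) ≠ 0 for all 1 ≤ k ≤ d−1}`. -/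
def Sset (d : ℕ) : Set (Matrix (Fin d) (Fin d) ℝ) :=
  {u | IsUniUpper d u ∧ ∀ k : ℕ, 1 ≤ k → k ≤ d - 1 → cornerMinor d k u ≠ 0}

theorem isUniUpper_det {d : ℕ} {u : Matrix (Fin d) (Fin d) ℝ} (hu : IsUniUpper d u) :
    u.det = 1 := by
  have h : u.BlockTriangular id := fun i j hij => hu.1 i j hij
  rw [Matrix.det_of_upperTriangular h]
  simp [hu.2]

theorem isUniUpper_inv {d : ℕ} {u : Matrix (Fin d) (Fin d) ℝ} (hu : IsUniUpper d u) :
    IsUniUpper d u⁻¹ := by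
  have hdet := isUniUpper_det hu
  have hun : IsUnit u.det := by rw [hdet]; exact isUnit_one
  haveI : Invertible u := Matrix.invertibleOfIsUnitDet u hun
  have h : u.BlockTriangular id := fun i j hij => hu.1 i j hij
  have h' : (u⁻¹).BlockTriangular id := Matrix.blockTriangular_inv_of_blockTriangular h
  refine ⟨fun i j hij => h' hij, fun i => ?_⟩
  have e := congrFun (congrFun (Matrix.mul_nonsing_inv u hun) i) i
  rw [Matrix.mul_apply, Finset.sum_eq_single i] at e
  · simpa [hu.2] using e
  · intro j _ hj
    rcases lt_or_gt_of_ne hj with hlt | hgt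
    · rw [hu.1 i j hlt, zero_mul]
    · rw [h' (show id i < id j from hgt), mul_zero]
  · simp

theorem finRotate_pow_val (n k : ℕ) (i : Fin (n + 1)) :
    (((finRotate (n + 1)) ^ k) i : ℕ) = (i + k) % (n + 1) := by
  induction k with
  | zero => simp [Nat.mod_eq_of_lt i.2]
  | succ k ih =>
    rw [pow_succ', Equiv.Perm.mul_apply, finRotate_succ_apply, Fin.val_add, ih]
    simp [Nat.add_assoc]

theorem block_minor {m n : Type*} [Fintype m] [Fintype n] [DecidableEq m] [DecidableEq n]
    (W V : Matrix (m ⊕ n) (m ⊕ n) ℝ) (h : W * V = 1) :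
    W.det * V.toBlocks₂₂.det = W.toBlocks₁₁.det := by
  have key : W * Matrix.fromBlocks 1 V.toBlocks₁₂ 0 V.toBlocks₂₂
      = Matrix.fromBlocks W.toBlocks₁₁ 0 W.toBlocks₂₁ 1 := by
    rw [← Matrix.fromBlocks_toBlocks W, ← Matrix.fromBlocks_toBlocks V,
      Matrix.fromBlocks_multiply, ← Matrix.fromBlocks_one, Matrix.fromBlocks_inj] at h
    conv_lhs => rw [← Matrix.fromBlocks_toBlocks W]
    rw [Matrix.fromBlocks_multiply, h.2.1, h.2.2.2]
    simp
  have := congrArg Matrix.det key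
  rwa [Matrix.det_mul, Matrix.det_fromBlocks_zero₂₁, Matrix.det_fromBlocks_zero₁₂,
    Matrix.det_one, Matrix.det_one, one_mul, mul_one] at this

theorem minor_rel (d : ℕ) (u : Matrix (Fin d) (Fin d) ℝ) (hu : IsUniUpper d u)
    (k : ℕ) (hk : 1 ≤ k) (hkd : k ≤ d - 1) :
    cornerMinor d k u⁻¹ = (-1) ^ (k * (d + 1)) * cornerMinor d (d - k) u := by
  obtain ⟨n, rfl⟩ : ∃ n, d = n + 1 := ⟨d - 1, by omega⟩
  have hdet := isUniUpper_det hu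
  have hun : IsUnit u.det := by rw [hdet]; exact isUnit_one
  let e1 : Fin (n + 1 - k) ⊕ Fin k ≃ Fin (n + 1) :=
    finSumFinEquiv.trans (finCongr (by omega))
  let r : Equiv.Perm (Fin (n + 1)) := (finRotate (n + 1)) ^ k
  let e2 := e1.trans r
  have hWV : u.submatrix e1 e2 * (u⁻¹).submatrix e2 e1 = 1 := by
    rw [Matrix.submatrix_mul_equiv, Matrix.mul_nonsing_inv u hun, Matrix.submatrix_one_equiv]
  have h := block_minor _ _ hWV
  have hW : (u.submatrix e1 e2).det = (-1) ^ (k * (n + 1 + 1)) := by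
    have : u.submatrix e1 e2 = (u.submatrix id r).submatrix e1 e1 := rfl
    rw [this, Matrix.det_submatrix_equiv_self, Matrix.det_permute', hdet]
    simp only [r, map_pow, sign_finRotate, mul_one]
    push_cast
    rw [← pow_mul, show k * (n + 1 + 1) = n * k + 2 * k by ring, pow_add, pow_mul _ 2 k]
    simp
  have hQ : ((u⁻¹).submatrix e2 e1).toBlocks₂₂.det = cornerMinor (n + 1) k u⁻¹ := by
    unfold cornerMinor
    congr 1
    ext i j
    have hi := i.2
    have hj := j.2
    simp only [Matrix.toBlocks₂₂, Matrix.of_apply, Matrix.submatrix_apply]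
    rw [dif_pos ⟨by omega, by omega⟩]
    refine congrArg₂ (fun a b => (u⁻¹ : Matrix _ _ ℝ) a b) (Fin.ext ?_) (Fin.ext rfl)
    simp only [e2, r, Equiv.trans_apply, finRotate_pow_val]
    simp only [e1, Equiv.trans_apply, finSumFinEquiv_apply_right, finCongr_apply, Fin.val_cast,
      Fin.val_natAdd]
    rw [show n + 1 - k + (i : ℕ) + k = i + (n + 1) by omega, Nat.add_mod_right,
      Nat.mod_eq_of_lt (by omega)]
  have hP : (u.submatrix e1 e2).toBlocks₁₁.det = cornerMinor (n + 1) (n + 1 - k) u := by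
    unfold cornerMinor
    congr 1
    ext i j
    have hi := i.2
    have hj := j.2
    simp only [Matrix.toBlocks₁₁, Matrix.of_apply, Matrix.submatrix_apply]
    rw [dif_pos ⟨by omega, by omega⟩]
    congr 1
    apply Fin.ext
    simp only [e2, r, Equiv.trans_apply, finRotate_pow_val]
    simp only [e1, Equiv.trans_apply, finSumFinEquiv_apply_left, finCongr_apply, Fin.val_cast,
      Fin.val_castAdd]
    rw [Nat.mod_eq_of_lt (by omega)]
    omega
  rw [hW, hQ, hP] at h
  rw [← h, ← mul_assoc, ← mul_pow]
  simp

theorem jacobi_minor_relation (d : ℕ) (hd : 2 ≤ d)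
    (u : Matrix (Fin d) (Fin d) ℝ) (hu : IsUniUpper d u) :
    (∀ k : ℕ, 1 ≤ k → k ≤ d - 1 →
      cornerMinor d k u⁻¹ = (-1) ^ (k * (d + 1)) * cornerMinor d (d - k) u) ∧
    ((∀ k : ℕ, 1 ≤ k → k ≤ d - 1 → cornerMinor d k u ≠ 0) →
      ∀ k : ℕ, 1 ≤ k → k ≤ d - 1 → cornerMinor d k u⁻¹ ≠ 0) ∧
    (u ∈ Sset d → u⁻¹ ∈ Sset d) := by
  have key : (∀ k : ℕ, 1 ≤ k → k ≤ d - 1 → cornerMinor d k u ≠ 0) →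
      ∀ k : ℕ, 1 ≤ k → k ≤ d - 1 → cornerMinor d k u⁻¹ ≠ 0 := by
    intro h k hk hkd
    rw [minor_rel d u hu k hk hkd]
    exact mul_ne_zero (pow_ne_zero _ (by norm_num)) (h _ (by omega) (by omega))
  exact ⟨minor_rel d u hu, key, fun h => ⟨isUniUpper_inv hu, key h.2⟩⟩
end

section
/- Let d be a natural number with d ≠ 5 and d ≡ 2, 3, 4, 5, or 6 (mod 8). Then for every u ∈ S_d, the inverse u⁻¹ does not lie in the connected component of S_d containing u. Equivalently, the involution u ↦ u⁻¹ of S_d does not leave invariant any connected component of S_d. -/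
set_option linter.unusedSectionVars false

section AbstractLift

variable {G E K : Type*} [Group G] [TopologicalSpace G] [IsTopologicalGroup G]
  [Group E] [TopologicalSpace E] [IsTopologicalGroup E]
  [Group K] [TopologicalSpace K] [IsTopologicalGroup K]

/-- A subgroup that contracts to its identity element. -/
def ContractsToOne (H : Subgroup G) : Prop :=
  ∃ h : C(unitInterval × H, H), (∀ x, h (0, x) = 1) ∧ (∀ x, h (1, x) = x) ∧ ∀ t, h (t, 1) = 1

theorem ContractsToOne.preconnectedSpace {H : Subgroup G} (hH : ContractsToOne H) :
    PreconnectedSpace H := by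
  obtain ⟨h, h0, h1, -⟩ := hH
  refine ⟨?_⟩
  refine isPreconnected_of_forall (1 : H) fun y _ => ?_
  refine ⟨Set.range fun t : unitInterval => h (t, y), Set.subset_univ _, ⟨0, h0 y⟩, ⟨1, h1 y⟩, ?_⟩
  exact isPreconnected_range (by fun_prop)

theorem q_mul_left (ι : K →* G) (q : G → K) (L : Subgroup G)
    (hL : ∀ g, g * (ι (q g))⁻¹ ∈ L) (hLK : ∀ k, ι k ∈ L → k = 1) (l g : G) (hl : l ∈ L) :
    q (l * g) = q g := by
  have h1 := L.mul_mem (L.mul_mem (L.inv_mem (hL (l * g))) hl) (hL g)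
  have h2 : (l * g * (ι (q (l * g)))⁻¹)⁻¹ * l * (g * (ι (q g))⁻¹) = ι (q (l * g) * (q g)⁻¹) := by
    simp only [map_mul, map_inv]; group
  rw [h2] at h1
  exact mul_inv_eq_one.1 (hLK _ h1)

theorem q_of_mul (ι : K →* G) (q : G → K) (L : Subgroup G)
    (hL : ∀ g, g * (ι (q g))⁻¹ ∈ L) (hLK : ∀ k, ι k ∈ L → k = 1) (l : G) (hl : l ∈ L) (k : K) :
    q (l * ι k) = k := by
  rw [q_mul_left ι q L hL hLK l _ hl]
  have h1 := L.inv_mem (hL (ι k))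
  rw [mul_inv_rev, inv_inv, ← map_inv, ← map_mul] at h1
  exact mul_inv_eq_one.1 (hLK _ h1)

theorem exists_lift_action (p : E →* K) (cov : IsCoveringMap p) (ι : K →* G) (hι : Continuous ι)
    (q : G → K) (hq : Continuous q) (hqι : ∀ k, q (ι k) = k) (H : Subgroup G)
    (hH : ContractsToOne H) :
    ∃ c : E × H → E, Continuous c ∧ (∀ s h, p (c (s, h)) = q (ι (p s) * h)) ∧
      ∀ s, c (s, 1) = s := by
  obtain ⟨h, h0, h1, h2⟩ := hH
  have hp := cov.continuous
  let Φ : C(unitInterval × (E × H), K) :=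
    ⟨fun x => q (ι (p x.2.1) * (h (x.1, x.2.2) : G)), by fun_prop⟩
  let f : C(E × H, E) := ⟨Prod.fst, continuous_fst⟩
  have H0 : ∀ a, Φ (0, a) = p (f a) := by
    intro a; simp [Φ, f, h0, hqι]
  have hl := cov.liftHomotopy_lifts Φ f H0
  refine ⟨fun x => cov.liftHomotopy Φ f H0 (1, x), by fun_prop, fun s x => ?_, fun s => ?_⟩
  · have := congrFun hl (1, (s, x))
    simp only [Function.comp] at this
    rw [this]; simp [Φ, h1]
  · have := cov.const_of_comp (g := fun t : unitInterval => cov.liftHomotopy Φ f H0 (t, (s, 1)))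
      (by fun_prop) (fun a a' => by
        have e1 := congrFun hl (a, (s, 1))
        have e2 := congrFun hl (a', (s, 1))
        simp only [Function.comp] at e1 e2
        rw [e1, e2]; simp [Φ, h2]) 1 0
    simp only at this ⊢
    rw [this, cov.liftHomotopy_zero]
    rfl

theorem exists_lifts (p : E →* K) (cov : IsCoveringMap p) (ι : K →* G) (hι : Continuous ι)
    (q : G → K) (hq : Continuous q) (L U : Subgroup G)
    (hL : ∀ g, g * (ι (q g))⁻¹ ∈ L) (hLK : ∀ k, ι k ∈ L → k = 1)
    (cL : ContractsToOne L) (cU : ContractsToOne U) :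
    ∃ (F : U → E) (c : E × L → E), Continuous F ∧ Continuous c ∧
      (∀ u, p (F u) = q u) ∧ (∀ s l, p (c (s, l)) = q (ι (p s) * l)) ∧
      (∀ s, c (s, 1) = s) ∧ (∀ s l l', c (c (s, l), l') = c (s, l * l')) ∧
      ∀ (u : U) (l1 l2 : L) (z : E), (u : G) = l1 * ι (p z) * l2 → F u = c (z, l2) →
        F u⁻¹ = c (z⁻¹, l1⁻¹) := by
  have hqι : ∀ k, q (ι k) = k := fun k => by
    simpa using q_of_mul ι q L hL hLK 1 L.one_mem k
  have hql := fun l g hl => q_mul_left ι q L hL hLK l g hl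
  have hqlk := q_of_mul ι q L hL hLK
  have hp := cov.continuous
  obtain ⟨c, cc, cp, c1⟩ := exists_lift_action p cov ι hι q hq hqι L cL
  obtain ⟨c', cc', cp', c1'⟩ := exists_lift_action p cov ι hι q hq hqι U cU
  have := cL.preconnectedSpace
  have := cU.preconnectedSpace
  set F : U → E := fun u => c' (1, u) with hF
  have cF : Continuous F := by fun_prop
  have pF : ∀ u, p (F u) = q u := fun u => by simp [hF, cp']
  have F1 : F 1 = 1 := by simp [hF, c1']
  have cassoc : ∀ s l l', c (c (s, l), l') = c (s, l * l') := by
    intro s l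
    refine fun l' => congrFun (cov.eq_of_comp_eq (g₁ := fun l' => c (c (s, l), l'))
      (g₂ := fun l' => c (s, l * l')) (by fun_prop) (by fun_prop) ?_ 1 (by simp [c1])) l'
    funext l'
    simp only [Function.comp, cp, Subgroup.coe_mul]
    have := hL (ι (p s) * l)
    rw [← hql _ (ι (q (ι (p s) * (l : G))) * (l' : G)) this]
    congr 1
    group
  have cinv : ∀ (s : E) (l : L) (m : L), ι (p s) * l = m * ι (p (c (s, l))) →
      c ((c (s, l))⁻¹, m⁻¹) = s⁻¹ := by
    intro s
    let M : L → L := fun l => ⟨ι (p s) * l * (ι (p (c (s, l))))⁻¹, by rw [cp]; exact hL _⟩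
    have hM : Continuous M := by
      refine Continuous.subtype_mk ?_ _
      fun_prop
    have key := cov.eq_of_comp_eq (g₁ := fun l => c ((c (s, l))⁻¹, (M l)⁻¹))
      (g₂ := fun l => s⁻¹) (by fun_prop) (by fun_prop) (by
        funext l
        simp only [Function.comp, cp, map_inv, M]
        have : (ι (q (ι (p s) * (l : G))))⁻¹ *
          ((⟨ι (p s) * (l : G) * (ι (q (ι (p s) * (l : G))))⁻¹, hL _⟩ : L)⁻¹ : L) =
            (l⁻¹ : G) * ι (p s)⁻¹ := by
          simp only [Subgroup.coe_inv, map_inv]; group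
        rw [this, hqlk _ (L.inv_mem l.2)]) 1 (by
        have : M 1 = 1 := by
          ext; simp [M, c1]
        simp [this, c1])
    intro l m hm
    have : m = M l := by
      ext; simp [M, hm]
    rw [this]
    exact congrFun key l
  refine ⟨F, c, cF, cc, pF, cp, c1, cassoc, ?_⟩
  let N : U → L := fun u => ⟨u * (ι (q u))⁻¹, hL _⟩
  have hN : Continuous N := by
    refine Continuous.subtype_mk ?_ _
    fun_prop
  have Finv : ∀ u, F u⁻¹ = c ((F u)⁻¹, (N u)⁻¹) := by
    refine fun u => congrFun (cov.eq_of_comp_eq (g₁ := fun u => F u⁻¹)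
      (g₂ := fun u => c ((F u)⁻¹, (N u)⁻¹)) (by fun_prop) (by fun_prop) ?_ 1 ?_) u
    · funext u
      simp only [Function.comp, cp, pF, map_inv, N, Subgroup.coe_inv]
      congr 1; group
    · have : N 1 = 1 := by
        ext; have := hqι 1; simp only [map_one] at this; simp [N, this]
      simp [this, F1, c1]
  intro u l1 l2 z hu hFu
  have h := cinv z l2 (l1⁻¹ * N u) (by
    rw [← hFu, pF]; simp only [N, Subgroup.coe_mul, Subgroup.coe_inv, hu]; group)
  rw [Finv, ← h, cassoc, hFu]
  congr 2
  group

end AbstractLift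

section Clifford

open Matrix

/-- The sign `∏_{j ∈ P} (-1)^{[j ∈ x]}`. -/
def chi {d : ℕ} (P x : Finset (Fin d)) : ℝ := ∏ j ∈ P, if j ∈ x then -1 else 1

theorem chi_mul_self {d : ℕ} (P x : Finset (Fin d)) : chi P x * chi P x = 1 := by
  rw [chi, ← Finset.prod_mul_distrib]
  refine Finset.prod_eq_one fun j _ => ?_
  split_ifs <;> norm_num

theorem chi_flip_mem {d : ℕ} (P x : Finset (Fin d)) (i : Fin d) (h : i ∈ P) :
    chi P (symmDiff x {i}) = - chi P x := by
  rw [chi, chi, ← Finset.mul_prod_erase P _ h, ← Finset.mul_prod_erase P _ h, ← neg_mul]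
  congr 1
  · by_cases hx : i ∈ x <;> simp [Finset.mem_symmDiff, hx]
  · refine Finset.prod_congr rfl fun j hj => ?_
    have : j ≠ i := Finset.ne_of_mem_erase hj
    simp [Finset.mem_symmDiff, this]

theorem chi_flip_notMem {d : ℕ} (P x : Finset (Fin d)) (i : Fin d) (h : i ∉ P) :
    chi P (symmDiff x {i}) = chi P x := by
  rw [chi, chi]
  refine Finset.prod_congr rfl fun j hj => ?_
  have : j ≠ i := fun h' => h (h' ▸ hj)
  simp [Finset.mem_symmDiff, this]

/-- signed translation operators -/
def Gop {d : ℕ} (P : Finset (Fin d)) (i : Fin d) : Matrix (Finset (Fin d)) (Finset (Fin d)) ℝ :=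
  Matrix.of fun x y => if y = symmDiff x {i} then chi P x else 0

theorem Gop_mul {d : ℕ} (P Q : Finset (Fin d)) (i j : Fin d) (x y : Finset (Fin d)) :
    (Gop P i * Gop Q j) x y =
      if y = symmDiff (symmDiff x {i}) {j} then chi P x * chi Q (symmDiff x {i}) else 0 := by
  rw [Matrix.mul_apply, Finset.sum_eq_single (symmDiff x {i})]
  · simp [Gop]
  · intro b _ hb
    simp [Gop, hb]
  · simp

theorem Gop_transpose {d : ℕ} (P : Finset (Fin d)) (i : Fin d) (h : i ∉ P) :
    (Gop P i)ᵀ = Gop P i := by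
  ext x y
  simp only [Matrix.transpose_apply, Gop, Matrix.of_apply]
  by_cases hxy : y = symmDiff x {i}
  · have : x = symmDiff y {i} := by rw [hxy, symmDiff_symmDiff_cancel_right]
    rw [if_pos this, if_pos hxy, hxy, chi_flip_notMem _ _ _ h]
  · have : x ≠ symmDiff y {i} := by
      rintro rfl; exact hxy (by rw [symmDiff_symmDiff_cancel_right])
    rw [if_neg this, if_neg hxy]

/-- the generators of the Clifford algebra -/
def gam {d : ℕ} (i : Fin d) : Matrix (Finset (Fin d)) (Finset (Fin d)) ℝ := Gop (Finset.Iio i) i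

/-- operators commuting with the generators -/
def rho {d : ℕ} (i : Fin d) : Matrix (Finset (Fin d)) (Finset (Fin d)) ℝ := Gop (Finset.Ioi i) i

/-- the parity operator -/
def par (d : ℕ) : Matrix (Finset (Fin d)) (Finset (Fin d)) ℝ :=
  Matrix.diagonal fun x => chi Finset.univ x

theorem gam_sq {d : ℕ} (i : Fin d) : gam i * gam i = 1 := by
  ext x y
  rw [gam, Gop_mul, chi_flip_notMem _ _ _ (by simp), chi_mul_self, symmDiff_symmDiff_cancel_right,
    Matrix.one_apply]
  simp [eq_comm]

theorem gam_anti_aux {d : ℕ} (i j : Fin d) (h : i < j) : gam i * gam j = - (gam j * gam i) := by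
  ext x y
  rw [Matrix.neg_apply, gam, gam, Gop_mul, Gop_mul, chi_flip_mem _ _ _ (by simpa using h),
    chi_flip_notMem _ _ _ (by simpa using h.le), symmDiff_right_comm]
  split_ifs <;> ring

theorem gam_anti {d : ℕ} (i j : Fin d) (h : i ≠ j) : gam i * gam j = - (gam j * gam i) := by
  rcases lt_or_gt_of_ne h with h | h
  · exact gam_anti_aux i j h
  · rw [gam_anti_aux j i h, neg_neg]

theorem gam_rho {d : ℕ} (i j : Fin d) : gam i * rho j = rho j * gam i := by
  ext x y
  rw [gam, rho, Gop_mul, Gop_mul, symmDiff_right_comm]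
  rcases lt_trichotomy i j with h | h | h
  · rw [chi_flip_notMem _ _ _ (by simpa using h.le), chi_flip_notMem _ _ _ (by simpa using h.le),
      mul_comm]
  · subst h
    rw [chi_flip_notMem _ _ _ (by simp), chi_flip_notMem _ _ _ (by simp), mul_comm]
  · rw [chi_flip_mem _ _ _ (by simpa using h), chi_flip_mem _ _ _ (by simpa using h)]
    split_ifs <;> ring

theorem gam_par {d : ℕ} (i : Fin d) : gam i * par d = - (par d * gam i) := by
  ext x y
  rw [Matrix.neg_apply, par, Matrix.mul_diagonal, Matrix.diagonal_mul, gam, Gop, Matrix.of_apply]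
  split_ifs with h
  · rw [h, chi_flip_mem _ _ _ (by simp)]; ring
  · simp

theorem gam_transpose {d : ℕ} (i : Fin d) : (gam i)ᵀ = gam i := Gop_transpose _ _ (by simp)

theorem par_sq (d : ℕ) : par d * par d = 1 := by
  rw [par, Matrix.diagonal_mul_diagonal]; simp [chi_mul_self]

theorem eq_scalar_of_commute {d : ℕ} (s : Matrix (Finset (Fin d)) (Finset (Fin d)) ℝ)
    (h1 : ∀ i, s * gam i = gam i * s) (h2 : ∀ i, s * rho i = rho i * s)
    (h3 : s * par d = par d * s) : s = s ∅ ∅ • (1 : Matrix _ _ ℝ) := by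
  have hD : ∀ i : Fin d, gam i * rho i * par d =
      Matrix.diagonal fun x => if i ∈ x then -1 else (1 : ℝ) := by
    intro i
    have : gam i * rho i =
        Matrix.diagonal fun x => chi (Finset.Iio i) x * chi (Finset.Ioi i) x := by
      ext x y
      rw [gam, rho, Gop_mul, symmDiff_symmDiff_cancel_right, chi_flip_notMem _ _ _ (by simp),
        Matrix.diagonal_apply]
      simp [eq_comm]
    rw [this, par, Matrix.diagonal_mul_diagonal]
    congr 1; funext x
    have e : (Finset.univ : Finset (Fin d)) = insert i (Finset.Iio i ∪ Finset.Ioi i) := by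
      ext j; simp only [Finset.mem_univ, Finset.mem_insert, Finset.mem_union, Finset.mem_Iio,
        Finset.mem_Ioi, true_iff]
      rcases lt_trichotomy i j with h | h | h <;> simp [h]
    have e2 : chi Finset.univ x = (if i ∈ x then -1 else 1) *
        (chi (Finset.Iio i) x * chi (Finset.Ioi i) x) := by
      rw [chi, e, Finset.prod_insert (by simp), Finset.prod_union]
      · rfl
      · rw [Finset.disjoint_left]; intro a; simp only [Finset.mem_Iio, Finset.mem_Ioi]
        intro h h'; exact absurd h (not_lt.2 h'.le)
    rw [e2]
    have a1 := chi_mul_self (Finset.Iio i) x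
    have a2 := chi_mul_self (Finset.Ioi i) x
    calc _ = (if i ∈ x then -1 else 1) * (chi (Finset.Iio i) x * chi (Finset.Iio i) x) *
          (chi (Finset.Ioi i) x * chi (Finset.Ioi i) x) := by ring
      _ = _ := by rw [a1, a2]; ring
  have hc : ∀ i, s * (gam i * rho i * par d) = (gam i * rho i * par d) * s := by
    intro i
    rw [← mul_assoc, ← mul_assoc, h1, mul_assoc (gam i), h2, mul_assoc, mul_assoc, mul_assoc, h3]
    simp only [mul_assoc]
  have hoff : ∀ x y, x ≠ y → s x y = 0 := by
    intro x y hxy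
    obtain ⟨i, hi⟩ : ∃ i, ¬ (i ∈ x ↔ i ∈ y) := by
      by_contra! h; exact hxy (Finset.ext h)
    have := congrFun (congrFun (hc i) x) y
    rw [hD, Matrix.mul_diagonal, Matrix.diagonal_mul] at this
    by_cases hx : i ∈ x <;> by_cases hy : i ∈ y <;> simp [hx, hy] at hi this <;> linarith
  have hdiag : ∀ x, s x x = s ∅ ∅ := by
    intro x
    induction x using Finset.induction_on with
    | empty => rfl
    | insert i x hi ih =>
      have hf : symmDiff x {i} = insert i x := by
        ext j; simp only [Finset.mem_symmDiff, Finset.mem_singleton, Finset.mem_insert]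
        by_cases hj : j = i
        · subst hj; simp [hi]
        · simp [hj]
      have := congrFun (congrFun (h1 i) x) (insert i x)
      rw [Matrix.mul_apply, Matrix.mul_apply, Finset.sum_eq_single x,
        Finset.sum_eq_single (insert i x)] at this
      · simp only [gam, Gop, Matrix.of_apply, hf, if_true] at this
        rw [mul_comm] at this
        have hne : chi (Finset.Iio i) x ≠ 0 := fun h0 => by
          have := chi_mul_self (Finset.Iio i) x; rw [h0] at this; norm_num at this
        rw [← ih]; exact (mul_left_cancel₀ hne this).symm
      · intro b _ hb; rw [hoff _ _ hb, mul_zero]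
      · simp
      · intro b _ hb; rw [hoff _ _ hb.symm, zero_mul]
      · simp
  ext x y
  by_cases hxy : x = y
  · subst hxy; simp [hdiag]
  · simp [hoff _ _ hxy, hxy]

/-- linear extension of the generators to vectors -/
def gamV {d : ℕ} (v : Fin d → ℝ) : Matrix (Finset (Fin d)) (Finset (Fin d)) ℝ :=
  ∑ i, v i • gam i

theorem gamV_add {d : ℕ} (v w : Fin d → ℝ) : gamV (v + w) = gamV v + gamV w := by
  simp [gamV, add_smul, Finset.sum_add_distrib]

theorem gamV_smul {d : ℕ} (a : ℝ) (v : Fin d → ℝ) : gamV (a • v) = a • gamV v := by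
  simp [gamV, Finset.smul_sum, smul_smul]

theorem gamV_single {d : ℕ} (i : Fin d) : gamV (Pi.single i 1) = gam i := by
  simp [gamV, Pi.single_apply]

theorem gamV_transpose {d : ℕ} (v : Fin d → ℝ) : (gamV v)ᵀ = gamV v := by
  simp [gamV, Matrix.transpose_sum, gam_transpose]

theorem gamV_rho {d : ℕ} (v : Fin d → ℝ) (j : Fin d) : gamV v * rho j = rho j * gamV v := by
  simp [gamV, Finset.sum_mul, Finset.mul_sum, gam_rho]

theorem gamV_par {d : ℕ} (v : Fin d → ℝ) : gamV v * par d = - (par d * gamV v) := by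
  simp [gamV, Finset.sum_mul, Finset.mul_sum, gam_par]

theorem gamV_anti {d : ℕ} (v w : Fin d → ℝ) :
    gamV v * gamV w + gamV w * gamV v = (2 * (v ⬝ᵥ w)) • (1 : Matrix _ _ ℝ) := by
  have e1 : gamV w * gamV v = ∑ i, ∑ j, (v i * w j) • (gam j * gam i) := by
    simp only [gamV, Finset.sum_mul, Finset.mul_sum, smul_mul_smul_comm]
    rw [Finset.sum_comm]
    simp only [mul_comm]
    rw [Finset.sum_comm]
  have e2 : gamV v * gamV w = ∑ i, ∑ j, (v i * w j) • (gam i * gam j) := by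
    simp only [gamV, Finset.sum_mul, Finset.mul_sum, smul_mul_smul_comm]
    rw [Finset.sum_comm]
  rw [e1, e2, ← Finset.sum_add_distrib]
  simp only [← Finset.sum_add_distrib, ← smul_add]
  have : ∀ i j : Fin d, gam i * gam j + gam j * gam i =
      if i = j then (2 : ℝ) • (1 : Matrix _ _ ℝ) else 0 := by
    intro i j
    split_ifs with h
    · subst h; rw [gam_sq, two_smul]
    · rw [gam_anti i j h, neg_add_cancel]
  simp only [this, smul_ite, smul_zero, Finset.sum_ite_eq, Finset.mem_univ, if_true,
    smul_smul, dotProduct]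
  rw [← Finset.sum_smul, Finset.mul_sum]
  congr 1
  exact Finset.sum_congr rfl fun i _ => by ring

theorem gamV_sq {d : ℕ} (v : Fin d → ℝ) : gamV v * gamV v = (v ⬝ᵥ v) • (1 : Matrix _ _ ℝ) := by
  have := gamV_anti v v
  rw [← two_smul ℝ, mul_smul] at this
  exact smul_right_injective _ (two_ne_zero) this

end Clifford

section PinGroup

open Matrix

/-- The orthogonal group. -/
abbrev Orth (n : Type) [Fintype n] [DecidableEq n] := Matrix.orthogonalGroup n ℝ

theorem orth_val_inv {n : Type} [Fintype n] [DecidableEq n] (g : Orth n) :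
    ((g⁻¹ : Orth n) : Matrix n n ℝ) = (g : Matrix n n ℝ)ᵀ := rfl

theorem orth_mul_transpose {n : Type} [Fintype n] [DecidableEq n] (g : Orth n) :
    (g : Matrix n n ℝ) * (g : Matrix n n ℝ)ᵀ = 1 := (Matrix.mem_orthogonalGroup_iff n ℝ).1 g.2

theorem orth_transpose_mul {n : Type} [Fintype n] [DecidableEq n] (g : Orth n) :
    (g : Matrix n n ℝ)ᵀ * (g : Matrix n n ℝ) = 1 := (Matrix.mem_orthogonalGroup_iff' n ℝ).1 g.2

theorem orth_det_sq {n : Type} [Fintype n] [DecidableEq n] (g : Orth n) :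
    (g : Matrix n n ℝ).det * (g : Matrix n n ℝ).det = 1 := by
  have := congrArg Matrix.det (orth_mul_transpose g)
  rwa [Matrix.det_mul, Matrix.det_transpose, Matrix.det_one] at this

instance orth_compact {n : Type} [Fintype n] [DecidableEq n] : CompactSpace (Orth n) := by
  refine isCompact_iff_compactSpace.1 ?_
  have hc : IsCompact (Set.univ.pi fun _ : n => Set.univ.pi fun _ : n => Set.Icc (-1 : ℝ) 1) :=
    isCompact_univ_pi fun _ => isCompact_univ_pi fun _ => isCompact_Icc
  refine IsCompact.of_isClosed_subset (s := (Set.univ.pi fun _ : n => Set.univ.pi fun _ : n => Set.Icc (-1 : ℝ) 1)) hc ?_ ?_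
  · have : ((Matrix.orthogonalGroup n ℝ : Submonoid (Matrix n n ℝ)) : Set (Matrix n n ℝ)) =
      {A : Matrix n n ℝ | A * Aᵀ = 1} := by
      ext A; exact Matrix.mem_orthogonalGroup_iff n ℝ
    rw [this]
    exact isClosed_eq (by fun_prop) (by fun_prop)
  · intro A hA i _ j _
    have := entry_norm_bound_of_unitary hA i j
    rw [Real.norm_eq_abs] at this
    exact abs_le.1 this

/-- The Pin group, as a group of pairs. -/
def PinG (d : ℕ) : Subgroup (Orth (Fin d) × Orth (Finset (Fin d))) where
  carrier := {e | (∀ i, e.2.1 * rho i = rho i * e.2.1) ∧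
    e.2.1 * par d = e.1.1.det • (par d * e.2.1) ∧
    ∀ v, e.2.1 * gamV v =
      e.1.1.det • (gamV (e.1.1 *ᵥ v) * e.2.1)}
  mul_mem' := by
    rintro ⟨g, s⟩ ⟨g', s'⟩ ⟨h1, h2, h3⟩ ⟨h1', h2', h3'⟩
    simp only at h1 h2 h3 h1' h2' h3'
    refine ⟨fun i => ?_, ?_, fun v => ?_⟩ <;>
      simp only [Prod.mk_mul_mk, Submonoid.coe_mul, Matrix.det_mul]
    · rw [mul_assoc, h1', ← mul_assoc, h1, mul_assoc]
    · rw [mul_assoc, h2', mul_smul_comm, ← mul_assoc, h2, smul_mul_assoc, smul_smul, mul_assoc,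
        mul_comm g'.1.det]
    · rw [mul_assoc, h3', mul_smul_comm, ← mul_assoc, h3, smul_mul_assoc, smul_smul, mul_assoc,
        mul_comm g'.1.det, Matrix.mulVec_mulVec]
  one_mem' := by
    refine ⟨fun i => ?_, ?_, fun v => ?_⟩ <;> simp
  inv_mem' := by
    rintro ⟨g, s⟩ ⟨h1, h2, h3⟩
    simp only at h1 h2 h3
    have hs := orth_mul_transpose s
    have hs' := orth_transpose_mul s
    refine ⟨fun i => ?_, ?_, fun v => ?_⟩ <;>
      simp only [Prod.inv_mk, orth_val_inv, Matrix.det_transpose]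
    · calc _ = s.1ᵀ * (rho i * s.1) * s.1ᵀ := by
            rw [mul_assoc, mul_assoc, hs, mul_one]
        _ = _ := by rw [← h1, ← mul_assoc, hs', one_mul]
    · calc _ = s.1ᵀ * (par d * s.1) * s.1ᵀ := by
            rw [mul_assoc, mul_assoc, hs, mul_one]
        _ = (g.1.det * g.1.det) •
            (s.1ᵀ * (par d * s.1) * s.1ᵀ) := by
            rw [orth_det_sq, one_smul]
        _ = g.1.det • (s.1ᵀ * (g.1.det •
            (par d * s.1)) * s.1ᵀ) := by
            rw [mul_smul_comm, smul_mul_assoc, smul_smul]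
        _ = _ := by rw [← h2, ← mul_assoc, hs', one_mul]
    · have h := h3 (g.1ᵀ *ᵥ v)
      rw [Matrix.mulVec_mulVec, orth_mul_transpose, Matrix.one_mulVec] at h
      calc _ = s.1ᵀ * (gamV v * s.1) * s.1ᵀ := by
            rw [mul_assoc, mul_assoc, hs, mul_one]
        _ = (g.1.det * g.1.det) •
            (s.1ᵀ * (gamV v * s.1) * s.1ᵀ) := by
            rw [orth_det_sq, one_smul]
        _ = g.1.det • (s.1ᵀ * (g.1.det •
            (gamV v * s.1)) * s.1ᵀ) := by
            rw [mul_smul_comm, smul_mul_assoc, smul_smul]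
        _ = _ := by rw [← h, ← mul_assoc, hs', one_mul]

/-- The projection from the Pin group to the orthogonal group. -/
def pinProj (d : ℕ) : PinG d →* Orth (Fin d) :=
  (MonoidHom.fst _ _).comp (PinG d).subtype

theorem pinProj_apply {d : ℕ} (e : PinG d) : pinProj d e = e.1.1 := rfl

theorem pinProj_continuous (d : ℕ) : Continuous (pinProj d) :=
  continuous_fst.comp continuous_subtype_val

instance pin_compact (d : ℕ) : CompactSpace (PinG d) := by
  refine isCompact_iff_compactSpace.1 (IsClosed.isCompact ?_)
  have : ((PinG d : Subgroup _) : Set (Orth (Fin d) × Orth (Finset (Fin d)))) =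
      (⋂ i, {e | e.2.1 * rho i = rho i * e.2.1}) ∩
      ({e | e.2.1 * par d =
        e.1.1.det • (par d * e.2.1)} ∩
      ⋂ v, {e | e.2.1 * gamV v =
        e.1.1.det • (gamV (e.1.1 *ᵥ v) * e.2.1)}) := by
    ext e
    simp only [Set.mem_inter_iff, Set.mem_iInter]
    rfl
  rw [this]
  have c2 : Continuous fun e : Orth (Fin d) × Orth (Finset (Fin d)) => e.2.1 :=
    continuous_subtype_val.comp continuous_snd
  have c1 : Continuous fun e : Orth (Fin d) × Orth (Finset (Fin d)) => e.1.1 :=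
    continuous_subtype_val.comp continuous_fst
  refine (isClosed_iInter fun i => isClosed_eq (c2.mul continuous_const)
      (continuous_const.mul c2)).inter
    ((isClosed_eq (c2.mul continuous_const) (c1.matrix_det.smul (continuous_const.mul c2))).inter
      (isClosed_iInter fun i => isClosed_eq (c2.mul continuous_const) ?_))
  unfold gamV
  refine (c1.matrix_det).smul (Continuous.mul ?_ c2)
  refine continuous_finsetSum _ fun j _ => ?_
  have hv : Continuous fun e : Orth (Fin d) × Orth (Finset (Fin d)) => e.1.1 *ᵥ i :=
    c1.matrix_mulVec continuous_const
  exact ((continuous_apply j).comp hv).smul continuous_const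

theorem pin_ker {d : ℕ} (e : PinG d) (h : pinProj d e = 1) :
    e.1.2.1 = 1 ∨ e.1.2.1 = -1 := by
  obtain ⟨⟨g, s⟩, h1, h2, h3⟩ := e
  have hg : g = 1 := h
  subst hg
  simp only [OneMemClass.coe_one, Matrix.det_one, one_smul, Matrix.one_mulVec] at h1 h2 h3 ⊢
  have hs := eq_scalar_of_commute s.1
    (fun i => by have := h3 (Pi.single i 1); rwa [gamV_single] at this) h1 h2
  have hs2 := orth_mul_transpose s
  rw [hs] at hs2 ⊢
  set a := s.1 ∅ ∅
  have := congrFun (congrFun hs2 ∅) ∅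
  simp at this
  have : (a - 1) * (a + 1) = 0 := by linarith
  rcases mul_eq_zero.1 this with h | h
  · left; rw [sub_eq_zero.1 h, one_smul]
  · right; rw [eq_neg_of_add_eq_zero_left h, neg_smul, one_smul]

/-- The reflection matrix attached to a unit vector. -/
def reflM {d : ℕ} (f : Fin d → ℝ) : Matrix (Fin d) (Fin d) ℝ := 1 - (2 : ℝ) • Matrix.vecMulVec f f

theorem reflM_mulVec {d : ℕ} (f v : Fin d → ℝ) : reflM f *ᵥ v = v - (2 * (f ⬝ᵥ v)) • f := by
  ext i
  simp only [reflM, Matrix.sub_mulVec, Matrix.one_mulVec, Matrix.smul_mulVec, Pi.sub_apply,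
    Pi.smul_apply, smul_eq_mul, Matrix.vecMulVec_mulVec]
  simp; ring

theorem reflM_mem {d : ℕ} (f : Fin d → ℝ) (hf : f ⬝ᵥ f = 1) :
    reflM f ∈ Matrix.orthogonalGroup (Fin d) ℝ := by
  rw [Matrix.mem_orthogonalGroup_iff]
  have : (reflM f)ᵀ = reflM f := by
    ext i j
    simp [reflM, Matrix.transpose_apply, Matrix.vecMulVec_apply, Matrix.one_apply, eq_comm, mul_comm]
  rw [this]
  simp only [reflM, mul_sub, sub_mul, mul_one, one_mul, smul_mul_smul_comm,
    Matrix.vecMulVec_mul_vecMulVec, hf]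
  rw [one_smul, two_mul, add_smul]; abel

theorem reflM_det {d : ℕ} (f : Fin d → ℝ) (hf : f ⬝ᵥ f = 1) : (reflM f).det = -1 := by
  have : reflM f = 1 + Matrix.replicateCol Unit ((-2 : ℝ) • f) * Matrix.replicateRow Unit f := by
    ext i j
    simp [reflM, Matrix.vecMulVec_apply, Matrix.mul_apply]; ring
  rw [this, Matrix.det_one_add_replicateCol_mul_replicateRow]
  simp [hf]; norm_num

/-- The element of the Pin group attached to a unit vector. -/
def pinRefl {d : ℕ} (f : Fin d → ℝ) (hf : f ⬝ᵥ f = 1) : PinG d :=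
  ⟨(⟨reflM f, reflM_mem f hf⟩, ⟨gamV f, by
    rw [Matrix.mem_orthogonalGroup_iff]
    change gamV f * (gamV f)ᵀ = 1
    rw [gamV_transpose, gamV_sq, hf, one_smul]⟩), by
    change _ ∧ _ ∧ _
    refine ⟨fun i => gamV_rho f i, ?_, fun v => ?_⟩ <;> simp only [reflM_det f hf, neg_smul, one_smul]
    · exact gamV_par f
    · rw [reflM_mulVec, sub_eq_add_neg, ← neg_smul, gamV_add, gamV_smul, add_mul, smul_mul_assoc,
        gamV_sq, hf, one_smul, neg_smul]
      have := gamV_anti f v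
      rw [← this]; abel⟩

theorem pinProj_surjective (d : ℕ) : Function.Surjective (pinProj d) := by
  have key : ∀ l : List (EuclideanSpace ℝ (Fin d)), ∃ e : PinG d, ∀ v : EuclideanSpace ℝ (Fin d),
      (l.map fun v => (ℝ ∙ v)ᗮ.reflection).prod v =
        WithLp.toLp 2 (e.1.1.1 *ᵥ v.ofLp) := by
    intro l
    induction l with
    | nil => exact ⟨1, fun v => by simp⟩
    | cons a l ih =>
      obtain ⟨e, he⟩ := ih
      by_cases ha : a = 0
      · refine ⟨e, fun v => ?_⟩
        rw [List.map_cons, List.prod_cons, LinearIsometryEquiv.coe_mul, Function.comp_apply, he]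
        subst ha
        simp only [Submodule.span_zero_singleton, Submodule.bot_orthogonal_eq_top]
        exact (Submodule.reflection_eq_self_iff _).2 Submodule.mem_top
      · set f : Fin d → ℝ := (‖a‖⁻¹ : ℝ) • a.ofLp with hfdef
        have hna : ‖a‖ ≠ 0 := norm_ne_zero_iff.2 ha
        have haa : a.ofLp ⬝ᵥ a.ofLp = ‖a‖ ^ 2 := by
          rw [EuclideanSpace.norm_sq_eq]; simp [dotProduct, sq]
        have hf : f ⬝ᵥ f = 1 := by
          rw [hfdef, smul_dotProduct, dotProduct_smul, haa]; simp; field_simp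
        refine ⟨pinRefl f hf * e, fun v => ?_⟩
        rw [List.map_cons, List.prod_cons, LinearIsometryEquiv.coe_mul, Function.comp_apply, he]
        have : (pinRefl f hf * e).1.1.1 = reflM f * e.1.1.1 := rfl
        rw [this, ← Matrix.mulVec_mulVec, reflM_mulVec, Submodule.reflection_orthogonal]
        set w := e.1.1.1 *ᵥ v.ofLp
        rw [LinearIsometryEquiv.trans_apply, Submodule.reflection_singleton_apply]
        ext i
        simp [hfdef, EuclideanSpace.inner_eq_star_dotProduct, dotProduct_comm w]
        field_simp
  intro g
  let φ₀ : EuclideanSpace ℝ (Fin d) →ₗᵢ[ℝ] EuclideanSpace ℝ (Fin d) :=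
    { toLinearMap := Matrix.toEuclideanLin g.1
      norm_map' := fun v => by
        have : ‖Matrix.toEuclideanLin g.1 v‖ ^ 2 = ‖v‖ ^ 2 := by
          rw [EuclideanSpace.norm_sq_eq, EuclideanSpace.norm_sq_eq]
          have h : (g.1 *ᵥ v.ofLp) ⬝ᵥ (g.1 *ᵥ v.ofLp) = v.ofLp ⬝ᵥ v.ofLp := by
            rw [Matrix.dotProduct_mulVec, Matrix.vecMul_mulVec, orth_transpose_mul,
              Matrix.vecMul_one]
          simpa [dotProduct, sq] using h
        exact (sq_eq_sq₀ (norm_nonneg _) (norm_nonneg _)).1 this }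
  let φ := φ₀.toLinearIsometryEquiv rfl
  obtain ⟨l, -, hl⟩ := φ.reflections_generate_dim
  obtain ⟨e, he⟩ := key l
  refine ⟨e, Subtype.ext ?_⟩
  rw [pinProj_apply]
  refine Matrix.toLin'.injective (LinearMap.ext fun v => ?_)
  have h1 := he (WithLp.toLp 2 v)
  rw [← hl] at h1
  have h2 : φ (WithLp.toLp 2 v) = WithLp.toLp 2 (g.1 *ᵥ v) := rfl
  rw [h2] at h1
  exact ((WithLp.toLp_injective 2) h1).symm

theorem pinProj_isCoveringMap (d : ℕ) : IsCoveringMap (pinProj d) := by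
  have hq : Topology.IsQuotientMap (pinProj d) :=
    (pinProj_continuous d).isClosedMap.isQuotientMap (pinProj_continuous d) (pinProj_surjective d)
  refine (hq.isQuotientCoveringMap_of_isDiscrete_ker_monoidHom ?_).isCoveringMap
  refine Set.Finite.isDiscrete ?_
  refine Set.Finite.of_finite_image (f := fun e : PinG d => e.1.2.1)
    (Set.Finite.subset (Set.toFinite {1, -1}) ?_) ?_
  · rintro _ ⟨e, he, rfl⟩
    exact pin_ker e he
  · intro e he e' he' hee
    have h1 : e.1.1 = 1 := he
    have h2 : e'.1.1 = 1 := he'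
    exact Subtype.ext (Prod.ext (h1.trans h2.symm) (Subtype.ext hee))

end PinGroup

section PinSquare

open Matrix

theorem exists_pin_prod {d : ℕ} {α : Type*} [DecidableEq α] (f : α → Fin d → ℝ) (J : Finset α)
    (h1 : ∀ i ∈ J, f i ⬝ᵥ f i = 1) (h2 : ∀ i ∈ J, ∀ j ∈ J, i ≠ j → f i ⬝ᵥ f j = 0) :
    ∃ e : PinG d, (∀ v, e.1.1.1 *ᵥ v = v - ∑ i ∈ J, (2 * (f i ⬝ᵥ v)) • f i) ∧
      e.1.1.1.det = (-1) ^ J.card ∧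
      e.1.2.1 * e.1.2.1 = ((-1 : ℝ) ^ (J.card.choose 2)) • (1 : Matrix _ _ ℝ) := by
  induction J using Finset.induction_on with
  | empty => exact ⟨1, by simp, by simp, by simp⟩
  | insert a J ha ih =>
    obtain ⟨e, he1, he2, he3⟩ := ih (fun i hi => h1 i (Finset.mem_insert_of_mem hi))
      (fun i hi j hj => h2 i (Finset.mem_insert_of_mem hi) j (Finset.mem_insert_of_mem hj))
    have ha1 := h1 a (Finset.mem_insert_self _ _)
    have ha2 : ∀ i ∈ J, f i ⬝ᵥ f a = 0 := fun i hi =>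
      h2 i (Finset.mem_insert_of_mem hi) a (Finset.mem_insert_self _ _)
        (fun h => ha (h ▸ hi))
    have ea : e.1.1.1 *ᵥ f a = f a := by
      rw [he1, Finset.sum_eq_zero, sub_zero]
      intro i hi; rw [ha2 i hi]; simp
    refine ⟨e * pinRefl (f a) ha1, fun v => ?_, ?_, ?_⟩
    · have : (e * pinRefl (f a) ha1).1.1.1 = e.1.1.1 * reflM (f a) := rfl
      rw [this, ← Matrix.mulVec_mulVec, reflM_mulVec, Matrix.mulVec_sub, Matrix.mulVec_smul, ea,
        he1, Finset.sum_insert ha]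
      abel
    · have : (e * pinRefl (f a) ha1).1.1.1 = e.1.1.1 * reflM (f a) := rfl
      rw [this, Matrix.det_mul, he2, reflM_det _ ha1, Finset.card_insert_of_notMem ha, pow_succ]
    · have : (e * pinRefl (f a) ha1).1.2.1 = e.1.2.1 * gamV (f a) := rfl
      rw [this]
      obtain ⟨-, -, h3⟩ := e.2
      have h := h3 (f a)
      rw [ea, he2] at h
      rw [Finset.card_insert_of_notMem ha, Nat.choose_succ_succ' J.card 1, Nat.choose_one_right]
      set n := J.card
      calc e.1.2.1 * gamV (f a) * (e.1.2.1 * gamV (f a))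
          = (((-1 : ℝ) ^ n) * ((-1 : ℝ) ^ n)) •
            (e.1.2.1 * gamV (f a) * (e.1.2.1 * gamV (f a))) := by
              rw [← mul_pow]; simp
        _ = ((-1 : ℝ) ^ n) • (e.1.2.1 * (((-1 : ℝ) ^ n) • (gamV (f a) * e.1.2.1)) *
              gamV (f a)) := by
              rw [mul_smul_comm, smul_mul_assoc, smul_smul]; simp only [mul_assoc]
        _ = ((-1 : ℝ) ^ n) • ((e.1.2.1 * e.1.2.1) * (gamV (f a) * gamV (f a))) := by
              rw [← h]; simp only [mul_assoc]
        _ = _ := by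
              rw [he3, gamV_sq, ha1, one_smul, mul_one, smul_smul, pow_add]

/-- The signed antidiagonal matrix. -/
def antiM {d : ℕ} (ε : Fin d → ℝ) : Matrix (Fin d) (Fin d) ℝ :=
  Matrix.of fun i j => if j = Fin.rev i then ε i else 0

theorem antiM_mulVec {d : ℕ} (ε : Fin d → ℝ) (v : Fin d → ℝ) (k : Fin d) :
    (antiM ε *ᵥ v) k = ε k * v (Fin.rev k) := by
  simp [antiM, Matrix.mulVec, dotProduct]

theorem pin_sq_ne_one (d : ℕ)
    (hd : d % 8 = 2 ∨ d % 8 = 3 ∨ d % 8 = 4 ∨ d % 8 = 5 ∨ d % 8 = 6)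
    (e : PinG d) (ε : Fin d → ℝ) (hε : ∀ i, ε i * ε i = 1) (h : e.1.1.1 = antiM ε)
    (hdet : (antiM ε).det = 1) : e * e ≠ 1 := by
  intro hee
  have hz : antiM ε * antiM ε = 1 := by
    rw [← h]; exact congrArg (fun e : PinG d => e.1.1.1) hee
  have hsym : ∀ i, ε (Fin.rev i) = ε i := by
    intro i
    have := congrFun (congrArg (fun M => M *ᵥ (Pi.single i 1)) hz) i
    simp only [← Matrix.mulVec_mulVec, antiM_mulVec, Matrix.one_mulVec, Fin.rev_rev,
      Pi.single_eq_same, mul_one] at this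
    have h2 := hε i
    calc ε (Fin.rev i) = (ε i * ε i) * ε (Fin.rev i) := by rw [h2, one_mul]
      _ = ε i * (ε i * ε (Fin.rev i)) := by ring
      _ = ε i := by rw [this, mul_one]
  have hs2 : (√2)⁻¹ * (√2)⁻¹ = (1/2 : ℝ) := by
    rw [← mul_inv, Real.mul_self_sqrt (by norm_num)]; norm_num
  let f : Fin d → Fin d → ℝ := fun i k =>
    if i = Fin.rev i then (if k = i then 1 else 0)
    else (if k = i then (√2)⁻¹ else if k = Fin.rev i then - ε i * (√2)⁻¹ else 0)
  let J : Finset (Fin d) := Finset.univ.filter fun i => i < Fin.rev i ∨ (i = Fin.rev i ∧ ε i = -1)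
  have hfdot : ∀ i v, f i ⬝ᵥ v = if i = Fin.rev i then v i
      else (√2)⁻¹ * (v i - ε i * v (Fin.rev i)) := by
    intro i v
    by_cases hi : i = Fin.rev i
    · rw [if_pos hi]; simp only [f, if_pos hi, dotProduct, ite_mul, one_mul, zero_mul]; simp
    · simp only [f, if_neg hi, dotProduct]
      rw [Finset.sum_eq_add_of_mem i (Fin.rev i) (Finset.mem_univ _) (Finset.mem_univ _) hi]
      · rw [if_pos rfl, if_neg (Ne.symm hi), if_pos rfl]; ring
      · rintro c - ⟨h1, h2⟩; rw [if_neg h1, if_neg h2, zero_mul]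
  have hJle : ∀ i ∈ J, i ≤ Fin.rev i := by
    intro i hi
    simp only [J, Finset.mem_filter, Finset.mem_univ, true_and] at hi
    rcases hi with hi | hi
    · exact hi.le
    · exact hi.1.le
  have h1 : ∀ i ∈ J, f i ⬝ᵥ f i = 1 := by
    intro i _
    rw [hfdot]
    by_cases hi : i = Fin.rev i
    · simp only [f, if_pos hi, if_true]
    · simp only [f, if_neg hi, if_true, if_neg (Ne.symm hi)]
      linear_combination (1 + ε i * ε i) * hs2 + (1/2) * hε i
  have h2 : ∀ i ∈ J, ∀ j ∈ J, i ≠ j → f i ⬝ᵥ f j = 0 := by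
    intro i hi j hj hij
    have a1 : i ≠ Fin.rev j := by
      intro hh
      have := hJle i hi; have h3 := hJle j hj
      rw [hh, Fin.rev_rev] at this
      exact hij (hh.trans (le_antisymm this h3))
    have a2 : Fin.rev i ≠ j := by
      intro hh; exact a1 (by rw [← hh, Fin.rev_rev])
    have a3 : Fin.rev i ≠ Fin.rev j := fun hh => hij (Fin.rev_injective hh)
    have b1 : f j i = 0 := by simp [f, hij, a1]
    have b2 : f j (Fin.rev i) = 0 := by simp [f, a2, a3]
    rw [hfdot, b1, b2]; simp
  obtain ⟨e0, he1, he2, he3⟩ := exists_pin_prod f J h1 h2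
  have hee0 : e0.1.1.1 = antiM ε := by
    refine Matrix.toLin'.injective (LinearMap.ext fun v => ?_)
    rw [Matrix.toLin'_apply, Matrix.toLin'_apply, he1]
    funext k
    rw [antiM_mulVec]
    simp only [Pi.sub_apply, Finset.sum_apply, Pi.smul_apply, smul_eq_mul]
    rcases lt_trichotomy k (Fin.rev k) with hk | hk | hk
    · rw [Finset.sum_eq_single k]
      · rw [hfdot]
        simp only [f, if_neg hk.ne, if_true]
        linear_combination (-2) * (v k - ε k * v (Fin.rev k)) * hs2
      · intro i hi hik
        have : k ≠ Fin.rev i := by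
          intro hh
          have := hJle i hi
          rw [hh, Fin.rev_rev] at hk
          exact absurd hk (not_lt.2 this)
        have : f i k = 0 := by simp [f, Ne.symm hik, this]
        rw [this, mul_zero]
      · intro hk'; exact absurd (by simp [J, hk]) hk'
    · rcases mul_self_eq_one_iff.1 (hε k) with hεk | hεk
      · rw [Finset.sum_eq_zero, ← hk, hεk]; · ring
        intro i hi
        have hik : i ≠ k := by
          rintro rfl
          simp only [J, Finset.mem_filter, Finset.mem_univ, true_and] at hi
          rcases hi with hi | hi
          · exact hi.ne hk
          · rw [hεk] at hi; norm_num at hi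
        have hik' : k ≠ Fin.rev i := by
          intro hh; apply hik; rw [← Fin.rev_rev i, ← hh, ← hk]
        have : f i k = 0 := by simp [f, Ne.symm hik, hik']
        rw [this, mul_zero]
      · rw [Finset.sum_eq_single k]
        · rw [hfdot, ← hk, hεk]
          simp only [f, if_pos hk, if_true]
          ring
        · intro i hi hik
          have hik' : k ≠ Fin.rev i := by
            intro hh; apply hik; rw [← Fin.rev_rev i, ← hh, ← hk]
          have : f i k = 0 := by simp [f, Ne.symm hik, hik']
          rw [this, mul_zero]
        · intro hk'; exact absurd (by simp [J, ← hk, hεk]) hk'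
    · rw [Finset.sum_eq_single (Fin.rev k)]
      · rw [hfdot]
        simp only [f, Fin.rev_rev, if_neg hk.ne, if_neg hk.ne', if_true, hsym]
        linear_combination (2 * ε k * v (Fin.rev k) - 2 * ε k * ε k * v k) * hs2 - v k * hε k
      · intro i hi hik
        have h3 : k ≠ Fin.rev i := by
          intro hh; apply hik; rw [hh, Fin.rev_rev]
        have h4 : k ≠ i := by
          rintro rfl
          exact absurd hk (not_lt.2 (hJle _ hi))
        have : f i k = 0 := by simp [f, h3, h4]
        rw [this, mul_zero]
      · intro hk'; exact absurd (by simp [J, hk]) hk'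
  have hn1 : d / 2 ≤ J.card := by
    have : (Finset.univ.filter fun i : Fin d => (i : ℕ) < d / 2) ⊆ J := by
      intro i hi
      simp only [J, Finset.mem_filter, Finset.mem_univ, true_and] at hi ⊢
      left; rw [Fin.lt_def, Fin.val_rev]; omega
    have h3 := Finset.card_le_card this
    rwa [Fin.card_filter_val_lt, min_eq_right (Nat.div_le_self _ _)] at h3
  have hn2 : J.card ≤ (d + 1) / 2 := by
    have : J ⊆ (Finset.univ.filter fun i : Fin d => (i : ℕ) < (d + 1) / 2) := by
      intro i hi
      have h3 := hJle i hi
      simp only [Finset.mem_filter, Finset.mem_univ, true_and]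
      rw [Fin.le_def, Fin.val_rev] at h3; omega
    have h3 := Finset.card_le_card this
    rwa [Fin.card_filter_val_lt, min_eq_right (by omega)] at h3
  have hev : Even J.card := by
    rw [hee0, hdet] at he2
    by_contra hodd
    rw [Nat.not_even_iff_odd] at hodd
    rw [hodd.neg_one_pow] at he2
    norm_num at he2
  obtain ⟨m, hm⟩ : ∃ m, J.card = 4 * m + 2 := by
    obtain ⟨r, hr⟩ := hev
    exact ⟨J.card / 4, by omega⟩
  have hodd : Odd (J.card.choose 2) := by
    rw [hm, Nat.choose_two_right]
    have : (4 * m + 2) * (4 * m + 2 - 1) / 2 = 2 * (4 * m * m + 3 * m) + 1 := by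
      have : (4 * m + 2) * (4 * m + 2 - 1) = 2 * (2 * (4 * m * m + 3 * m) + 1) := by
        rw [show 4 * m + 2 - 1 = 4 * m + 1 by omega]; ring
      rw [this]; simp
    rw [this]; exact odd_two_mul_add_one _
  rw [hodd.neg_one_pow] at he3
  have hker := pin_ker (e * e0⁻¹) (by
    rw [map_mul, map_inv, mul_inv_eq_one]
    exact Subtype.ext (h.trans hee0.symm))
  have hes : e.1.2.1 = (e * e0⁻¹).1.2.1 * e0.1.2.1 := by
    have : e = (e * e0⁻¹) * e0 := by group
    conv_lhs => rw [this]
    rfl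
  have hsq : e.1.2.1 * e.1.2.1 = 1 := congrArg (fun e : PinG d => e.1.2.1) hee
  have : e.1.2.1 * e.1.2.1 = e0.1.2.1 * e0.1.2.1 := by
    rcases hker with hk | hk <;> rw [hes, hk] <;> simp
  rw [hsq, he3] at this
  have := congrFun (congrFun this ∅) ∅
  simp at this
  norm_num at this

end PinSquare

section MatrixPart

open Matrix

/-- The leading block of indices `< k`. -/
def leadB {d : ℕ} (A : Matrix (Fin d) (Fin d) ℝ) (k : Fin d) :
    Matrix {i : Fin d // i < k} {i : Fin d // i < k} ℝ :=
  A.submatrix Subtype.val Subtype.val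

/-- The unit lower triangular matrix of Gaussian elimination. -/
noncomputable def elimN {d : ℕ} (A : Matrix (Fin d) (Fin d) ℝ) : Matrix (Fin d) (Fin d) ℝ :=
  Matrix.of fun k j => if h : j < k then
    - ∑ i : {i : Fin d // i < k}, A k i * (leadB A k)⁻¹ i ⟨j, h⟩ else if j = k then 1 else 0

theorem elimN_diag {d : ℕ} (A : Matrix (Fin d) (Fin d) ℝ) (k : Fin d) : elimN A k k = 1 := by
  simp [elimN]

theorem elimN_upper {d : ℕ} (A : Matrix (Fin d) (Fin d) ℝ) (k j : Fin d) (h : k < j) :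
    elimN A k j = 0 := by
  simp [elimN, h.not_gt, h.ne']

theorem elimN_lower {d : ℕ} (A : Matrix (Fin d) (Fin d) ℝ) (k : Fin d) (j : {i : Fin d // i < k}) :
    elimN A k j = - ∑ i : {i : Fin d // i < k}, A k i * (leadB A k)⁻¹ i j := by
  simp only [elimN, Matrix.of_apply]
  rw [dif_pos j.2]

theorem elimN_mul {d : ℕ} (A : Matrix (Fin d) (Fin d) ℝ) (k j : Fin d) (h : j < k)
    (hA : (leadB A k).det ≠ 0) : (elimN A * A) k j = 0 := by
  rw [Matrix.mul_apply, ← Fintype.sum_subtype_add_sum_subtype (fun i => i < k)]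
  have h1 : ∑ i : {i : Fin d // ¬ i < k}, elimN A k i * A i j = A k j := by
    rw [Fintype.sum_eq_single ⟨k, lt_irrefl k⟩]
    · rw [elimN_diag, one_mul]
    · rintro ⟨i, hi⟩ hne
      have : k < i := lt_of_le_of_ne (not_lt.1 hi) fun e => hne (by simp [e])
      rw [elimN_upper A k i this, zero_mul]
  rw [h1]
  have h2 : ∀ i : {i : Fin d // i < k}, elimN A k i * A i j =
      - ∑ i' : {i : Fin d // i < k}, A k i' * ((leadB A k)⁻¹ i' i * (leadB A k) i ⟨j, h⟩) := by
    intro i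
    rw [elimN_lower, neg_mul, Finset.sum_mul]
    simp only [leadB, Matrix.submatrix_apply, mul_assoc]
  simp only [h2]
  rw [Finset.sum_neg_distrib, Finset.sum_comm]
  simp only [← Finset.mul_sum, ← Matrix.mul_apply]
  rw [Matrix.nonsing_inv_mul _ (isUnit_iff_ne_zero.2 hA)]
  rw [Fintype.sum_eq_single ⟨j, h⟩]
  · simp
  · intro i hi
    rw [Matrix.one_apply_ne hi, mul_zero]

theorem elimN_continuous {d : ℕ} {X : Type*} [TopologicalSpace X]
    (f : X → Matrix (Fin d) (Fin d) ℝ) (hf : Continuous f)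
    (h : ∀ x k, (leadB (f x) k).det ≠ 0) : Continuous fun x => elimN (f x) := by
  have hl : ∀ k, Continuous fun x => leadB (f x) k := fun k => hf.matrix_submatrix _ _
  have hinv : ∀ k, Continuous fun x => (leadB (f x) k)⁻¹ := by
    intro k
    simp only [Matrix.inv_def, Ring.inverse_eq_inv']
    exact ((hl k).matrix_det.inv₀ fun x => h x k).smul (hl k).matrix_adjugate
  refine continuous_matrix fun k j => ?_
  simp only [elimN, Matrix.of_apply]
  split_ifs with hjk
  · refine (continuous_finsetSum _ fun i _ => ?_).neg
    exact (hf.matrix_elem _ _).mul ((hinv k).matrix_elem _ _)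
  · exact continuous_const
  · exact continuous_const

theorem lower_mul {d : ℕ} {A B : Matrix (Fin d) (Fin d) ℝ} (hA : ∀ i j, i < j → A i j = 0)
    (hB : ∀ i j, i < j → B i j = 0) (i j : Fin d) (h : i < j) : (A * B) i j = 0 := by
  rw [Matrix.mul_apply]
  refine Finset.sum_eq_zero fun k _ => ?_
  rcases lt_or_ge i k with hk | hk
  · rw [hA _ _ hk, zero_mul]
  · rw [hB _ _ (hk.trans_lt h), mul_zero]

theorem lower_mul_diag {d : ℕ} {A B : Matrix (Fin d) (Fin d) ℝ} (hA : ∀ i j, i < j → A i j = 0)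
    (hB : ∀ i j, i < j → B i j = 0) (i : Fin d) : (A * B) i i = A i i * B i i := by
  rw [Matrix.mul_apply]
  refine Fintype.sum_eq_single i fun k hk => ?_
  rcases lt_or_gt_of_ne hk with hk | hk
  · rw [hB _ _ hk, mul_zero]
  · rw [hA _ _ hk, zero_mul]

theorem upper_mul {d : ℕ} {A B : Matrix (Fin d) (Fin d) ℝ} (hA : ∀ i j, j < i → A i j = 0)
    (hB : ∀ i j, j < i → B i j = 0) (i j : Fin d) (h : j < i) : (A * B) i j = 0 := by
  rw [Matrix.mul_apply]
  refine Finset.sum_eq_zero fun k _ => ?_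
  rcases lt_or_ge k i with hk | hk
  · rw [hA _ _ hk, zero_mul]
  · rw [hB _ _ (h.trans_le hk), mul_zero]

theorem upper_mul_diag {d : ℕ} {A B : Matrix (Fin d) (Fin d) ℝ} (hA : ∀ i j, j < i → A i j = 0)
    (hB : ∀ i j, j < i → B i j = 0) (i : Fin d) : (A * B) i i = A i i * B i i := by
  rw [Matrix.mul_apply]
  refine Fintype.sum_eq_single i fun k hk => ?_
  rcases lt_or_gt_of_ne hk with hk | hk
  · rw [hA _ _ hk, zero_mul]
  · rw [hB _ _ hk, mul_zero]

theorem det_lower {d : ℕ} {A : Matrix (Fin d) (Fin d) ℝ} (hA : ∀ i j, i < j → A i j = 0) :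
    A.det = ∏ i, A i i := Matrix.det_of_isLowerTriangular A (fun i j h => hA i j h)

theorem det_upper {d : ℕ} {A : Matrix (Fin d) (Fin d) ℝ} (hA : ∀ i j, j < i → A i j = 0) :
    A.det = ∏ i, A i i := Matrix.det_of_isUpperTriangular (fun i j h => hA i j h)

theorem inv_upper {d : ℕ} {A : Matrix (Fin d) (Fin d) ℝ} (hA : ∀ i j, j < i → A i j = 0)
    (hd : A.det ≠ 0) (i j : Fin d) (h : j < i) : A⁻¹ i j = 0 := by
  have : Invertible A := Matrix.invertibleOfIsUnitDet A (isUnit_iff_ne_zero.2 hd)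
  have h1 : A.BlockTriangular id := fun i j h => hA i j h
  exact Matrix.blockTriangular_inv_of_blockTriangular h1 h

theorem inv_lower {d : ℕ} {A : Matrix (Fin d) (Fin d) ℝ} (hA : ∀ i j, i < j → A i j = 0)
    (hd : A.det ≠ 0) (i j : Fin d) (h : i < j) : A⁻¹ i j = 0 := by
  have := inv_upper (A := Aᵀ) (fun i j h => hA j i h) (by rwa [Matrix.det_transpose]) j i h
  rwa [← Matrix.transpose_nonsing_inv] at this

theorem continuous_gl {d : ℕ} {X : Type*} [TopologicalSpace X] (f : X → GL (Fin d) ℝ)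
    (hf : Continuous fun x => (f x : Matrix (Fin d) (Fin d) ℝ)) : Continuous f := by
  rw [Units.continuous_iff]
  refine ⟨hf, ?_⟩
  simp only [Matrix.coe_units_inv, Matrix.inv_def, Ring.inverse_eq_inv']
  exact (hf.matrix_det.inv₀ fun x => (Matrix.isUnits_det_units (f x)).ne_zero).smul
    hf.matrix_adjugate

theorem gl_det_ne {d : ℕ} (g : GL (Fin d) ℝ) : (g : Matrix (Fin d) (Fin d) ℝ).det ≠ 0 :=
  (Matrix.isUnits_det_units g).ne_zero

/-- Lower triangular matrices with positive diagonal. -/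
def lowG (d : ℕ) : Subgroup (GL (Fin d) ℝ) where
  carrier := {g | (∀ i j, i < j → g.1 i j = 0) ∧ ∀ i, 0 < g.1 i i}
  one_mem' := ⟨fun i j h => Matrix.one_apply_ne h.ne, fun i => by simp⟩
  mul_mem' := by
    intro a b ha hb
    refine ⟨fun i j h => lower_mul ha.1 hb.1 i j h, fun i => ?_⟩
    rw [Units.val_mul, lower_mul_diag ha.1 hb.1 i]
    exact mul_pos (ha.2 i) (hb.2 i)
  inv_mem' := by
    intro a ha
    have h1 : ∀ i j, i < j → (a⁻¹).1 i j = 0 := by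
      intro i j h
      rw [Matrix.coe_units_inv]
      exact inv_lower ha.1 (gl_det_ne a) i j h
    refine ⟨h1, fun i => ?_⟩
    have h2 := lower_mul_diag ha.1 h1 i
    rw [Units.mul_inv, Matrix.one_apply_eq] at h2
    have := ha.2 i
    by_contra h3
    nlinarith

/-- Unipotent upper triangular matrices. -/
def uniG (d : ℕ) : Subgroup (GL (Fin d) ℝ) where
  carrier := {g | (∀ i j, j < i → g.1 i j = 0) ∧ ∀ i, g.1 i i = 1}
  one_mem' := ⟨fun i j h => Matrix.one_apply_ne h.ne', fun i => by simp⟩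
  mul_mem' := by
    intro a b ha hb
    refine ⟨fun i j h => upper_mul ha.1 hb.1 i j h, fun i => ?_⟩
    rw [Units.val_mul, upper_mul_diag ha.1 hb.1 i, ha.2, hb.2, one_mul]
  inv_mem' := by
    intro a ha
    have h1 : ∀ i j, j < i → (a⁻¹).1 i j = 0 := by
      intro i j h
      rw [Matrix.coe_units_inv]
      exact inv_upper ha.1 (gl_det_ne a) i j h
    refine ⟨h1, fun i => ?_⟩
    have h2 := upper_mul_diag ha.1 h1 i
    rw [Units.mul_inv, Matrix.one_apply_eq, ha.2, one_mul] at h2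
    exact h2.symm

theorem contracts_of_convex {d : ℕ} (H : Subgroup (GL (Fin d) ℝ))
    (hH : ∀ (t : unitInterval) (x : H), ∃ y : H,
      (y : GL (Fin d) ℝ).1 = (1 - (t : ℝ)) • 1 + (t : ℝ) • (x : GL (Fin d) ℝ).1) :
    ContractsToOne H := by
  choose h hh using hH
  have hval : ∀ a b : H, (a : GL (Fin d) ℝ).1 = (b : GL (Fin d) ℝ).1 → a = b :=
    fun a b e => Subtype.ext (Units.ext e)
  refine ⟨⟨fun x => h x.1 x.2, ?_⟩, ?_, ?_, ?_⟩
  · refine Continuous.subtype_mk (continuous_gl (fun x : unitInterval × H =>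
      (h x.1 x.2 : GL (Fin d) ℝ)) ?_) (fun x => (h x.1 x.2).2)
    simp only [hh]
    have : Continuous fun x : unitInterval × H => ((x.2 : GL (Fin d) ℝ)).1 :=
      Units.continuous_val.comp (continuous_subtype_val.comp continuous_snd)
    have ht : Continuous fun x : unitInterval × H => (x.1 : ℝ) :=
      continuous_subtype_val.comp continuous_fst
    exact ((continuous_const.sub ht).smul continuous_const).add (ht.smul this)
  · intro x
    refine hval _ _ ?_
    simp [hh]
  · intro x
    refine hval _ _ ?_
    simp [hh]
  · intro t
    refine hval _ _ ?_
    simp only [ContinuousMap.coe_mk, hh, OneMemClass.coe_one, Units.val_one]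
    rw [← add_smul, sub_add_cancel, one_smul]

theorem lowG_contracts (d : ℕ) : ContractsToOne (lowG d) := by
  refine contracts_of_convex _ fun t x => ?_
  have hx := x.2
  have h1 : ∀ i j, i < j → ((1 - (t : ℝ)) • 1 + (t : ℝ) • (x : GL (Fin d) ℝ).1) i j = 0 := by
    intro i j h
    simp [Matrix.one_apply_ne h.ne, hx.1 i j h]
  have h2 : ∀ i, 0 < ((1 - (t : ℝ)) • 1 + (t : ℝ) • (x : GL (Fin d) ℝ).1) i i := by
    intro i
    have := hx.2 i
    have t0 := t.2.1
    have t1 := t.2.2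
    simp only [Matrix.add_apply, Matrix.smul_apply, Matrix.one_apply_eq, smul_eq_mul, mul_one]
    rcases t0.eq_or_lt with h0 | h0
    · rw [← h0]; norm_num
    · nlinarith [mul_pos h0 this]
  refine ⟨⟨Matrix.GeneralLinearGroup.mkOfDetNeZero _ ?_, h1, h2⟩, rfl⟩
  rw [det_lower h1]
  exact (Finset.prod_pos fun i _ => h2 i).ne'

theorem uniG_contracts (d : ℕ) : ContractsToOne (uniG d) := by
  refine contracts_of_convex _ fun t x => ?_
  have hx := x.2
  have h1 : ∀ i j, j < i → ((1 - (t : ℝ)) • 1 + (t : ℝ) • (x : GL (Fin d) ℝ).1) i j = 0 := by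
    intro i j h
    simp [Matrix.one_apply_ne h.ne', hx.1 i j h]
  have h2 : ∀ i, ((1 - (t : ℝ)) • 1 + (t : ℝ) • (x : GL (Fin d) ℝ).1) i i = 1 := by
    intro i
    simp [hx.2 i]
  refine ⟨⟨Matrix.GeneralLinearGroup.mkOfDetNeZero _ ?_, h1, h2⟩, rfl⟩
  rw [det_upper h1, Finset.prod_eq_one fun i _ => h2 i]
  exact one_ne_zero

/-- The inclusion of the orthogonal group. -/
def orthGL (d : ℕ) : Orth (Fin d) →* GL (Fin d) ℝ where
  toFun k := ⟨k.1, k.1ᵀ, orth_mul_transpose k, orth_transpose_mul k⟩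
  map_one' := Units.ext rfl
  map_mul' _ _ := Units.ext rfl

theorem orthGL_val (d : ℕ) (k : Orth (Fin d)) : (orthGL d k).1 = k.1 := rfl

theorem orthGL_continuous (d : ℕ) : Continuous (orthGL d) :=
  continuous_gl _ continuous_subtype_val

theorem orthGL_low (d : ℕ) (k : Orth (Fin d)) (h : orthGL d k ∈ lowG d) : k = 1 := by
  have h1 := h.1
  have h2 := h.2
  have h3 := ((lowG d).inv_mem h).1
  rw [← map_inv] at h3
  simp only [orthGL_val, orth_val_inv, Matrix.transpose_apply] at h1 h2 h3
  have h4 := orth_mul_transpose k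
  refine Subtype.ext (Matrix.ext fun i j => ?_)
  rcases lt_trichotomy i j with hij | hij | hij
  · rw [h1 i j hij]; exact (Matrix.one_apply_ne hij.ne).symm
  · subst hij
    have h5 := lower_mul_diag (A := k.1) (B := k.1ᵀ) h1 (fun i j h => h3 i j h) i
    rw [h4, Matrix.transpose_apply, Matrix.one_apply_eq] at h5
    have := h2 i
    have e : k.1 i i = 1 := by nlinarith
    rw [e]; exact (Matrix.one_apply_eq i).symm
  · rw [h3 j i hij]; exact (Matrix.one_apply_ne hij.ne').symm

end MatrixPart

section GramSchmidt

open Matrix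

theorem gram_posDef {d : ℕ} (A : Matrix (Fin d) (Fin d) ℝ) (hA : A.det ≠ 0) :
    (A * Aᵀ).PosDef := by
  have := Matrix.PosDef.mul_conjTranspose_self A
    (Matrix.vecMul_injective_of_isUnit
      ((Matrix.isUnit_iff_isUnit_det A).2 (isUnit_iff_ne_zero.2 hA)))
  rwa [Matrix.conjTranspose_eq_transpose_of_trivial] at this

theorem elimN_det {d : ℕ} (A : Matrix (Fin d) (Fin d) ℝ) : (elimN A).det = 1 := by
  rw [det_lower (elimN_upper A)]
  exact Finset.prod_eq_one fun i _ => elimN_diag A i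

theorem exists_gs (d : ℕ) : ∃ q : GL (Fin d) ℝ → Orth (Fin d), Continuous q ∧
    ∀ g, g * (orthGL d (q g))⁻¹ ∈ lowG d := by
  let R : GL (Fin d) ℝ → Matrix (Fin d) (Fin d) ℝ := fun g => elimN (g.1 * g.1ᵀ) * g.1
  have hlead : ∀ (g : GL (Fin d) ℝ) k, (leadB (g.1 * g.1ᵀ) k).det ≠ 0 := fun g k =>
    ((gram_posDef g.1 (gl_det_ne g)).submatrix Subtype.val_injective).det_pos.ne'
  have hRdet : ∀ g, (R g).det ≠ 0 := fun g => by
    simp only [R, Matrix.det_mul, elimN_det, one_mul]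
    exact gl_det_ne g
  have hgc : Continuous fun g : GL (Fin d) ℝ => g.1 := Units.continuous_val
  have hRc : Continuous R :=
    (elimN_continuous _ (hgc.matrix_mul hgc.matrix_transpose) hlead).matrix_mul hgc
  have hDpos : ∀ g i, 0 < (R g * (R g)ᵀ) i i := fun g i =>
    (gram_posDef (R g) (hRdet g)).diag_pos
  have hoff0 : ∀ g i j, j < i → (R g * (R g)ᵀ) i j = 0 := by
    intro g i j h
    have e : R g * (R g)ᵀ = (elimN (g.1 * g.1ᵀ) * (g.1 * g.1ᵀ)) * (elimN (g.1 * g.1ᵀ))ᵀ := by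
      simp only [R, Matrix.transpose_mul, Matrix.mul_assoc]
    rw [e]
    exact upper_mul (fun i j h => elimN_mul _ i j h (hlead g i))
      (fun i j h => elimN_upper _ j i h) i j h
  have hoff : ∀ g i j, i ≠ j → (R g * (R g)ᵀ) i j = 0 := by
    intro g i j h
    rcases lt_or_gt_of_ne h with h | h
    · have e : (R g * (R g)ᵀ)ᵀ = R g * (R g)ᵀ := by
        rw [Matrix.transpose_mul, Matrix.transpose_transpose]
      rw [← e, Matrix.transpose_apply]
      exact hoff0 g j i h
    · exact hoff0 g i j h
  let s : GL (Fin d) ℝ → Fin d → ℝ := fun g i => (Real.sqrt ((R g * (R g)ᵀ) i i))⁻¹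
  have hs : ∀ g i, 0 < s g i := fun g i => inv_pos.2 (Real.sqrt_pos.2 (hDpos g i))
  have hsc : Continuous s := by
    refine continuous_pi fun i => ?_
    refine Continuous.inv₀ ?_ fun g => (Real.sqrt_pos.2 (hDpos g i)).ne'
    exact Real.continuous_sqrt.comp ((hRc.matrix_mul hRc.matrix_transpose).matrix_elem i i)
  have horth : ∀ g, Matrix.diagonal (s g) * R g ∈ Matrix.orthogonalGroup (Fin d) ℝ := by
    intro g
    rw [Matrix.mem_orthogonalGroup_iff]
    change Matrix.diagonal (s g) * R g * (Matrix.diagonal (s g) * R g)ᵀ = 1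
    have e : Matrix.diagonal (s g) * R g * (Matrix.diagonal (s g) * R g)ᵀ =
        Matrix.diagonal (s g) * (R g * (R g)ᵀ) * Matrix.diagonal (s g) := by
      rw [Matrix.transpose_mul, Matrix.diagonal_transpose]
      simp only [Matrix.mul_assoc]
    rw [e]
    ext i j
    rw [Matrix.mul_diagonal, Matrix.diagonal_mul]
    by_cases h : i = j
    · subst h
      rw [Matrix.one_apply_eq]
      have h1 := Real.mul_self_sqrt (hDpos g i).le
      have h2 := (Real.sqrt_pos.2 (hDpos g i)).ne'
      simp only [s]
      field_simp
      nlinarith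
    · rw [hoff g i j h, Matrix.one_apply_ne h]; ring
  refine ⟨fun g => ⟨_, horth g⟩, ?_, ?_⟩
  · exact (hsc.matrix_diagonal.matrix_mul hRc).subtype_mk _
  · intro g
    have h1 : (g * (orthGL d ⟨_, horth g⟩)⁻¹)⁻¹ ∈ lowG d := by
      rw [_root_.mul_inv_rev, inv_inv]
      have e : (orthGL d ⟨_, horth g⟩ * g⁻¹).1 = Matrix.diagonal (s g) * elimN (g.1 * g.1ᵀ) := by
        rw [Units.val_mul, orthGL_val]
        simp only [R]
        rw [Matrix.mul_assoc, Matrix.mul_assoc, Units.mul_inv, Matrix.mul_one]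
      refine ⟨fun i j h => ?_, fun i => ?_⟩
      · rw [e, Matrix.diagonal_mul, elimN_upper _ _ _ h, mul_zero]
      · rw [e, Matrix.diagonal_mul, elimN_diag, mul_one]
        exact hs g i
    exact inv_mem_iff.1 h1

end GramSchmidt

section Bruhat

open Matrix

theorem leadB_rev_det {d : ℕ} (u : Matrix (Fin d) (Fin d) ℝ) (hu : u ∈ Sset d) (k : Fin d) :
    (leadB (u.submatrix id Fin.rev) k).det ≠ 0 := by
  let e : Fin (k : ℕ) ≃ {i : Fin d // i < k} :=
    { toFun := fun i => ⟨⟨i, i.2.trans k.2⟩, i.2⟩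
      invFun := fun i => ⟨i.1, i.2⟩
      left_inv := fun i => rfl
      right_inv := fun i => rfl }
  rw [← Matrix.det_submatrix_equiv_self e]
  rcases Nat.eq_zero_or_pos (k : ℕ) with h0 | h0
  · have : IsEmpty (Fin (k : ℕ)) := by rw [h0]; infer_instance
    rw [Matrix.det_isEmpty]; exact one_ne_zero
  have hk := k.2
  have hc := hu.2 k h0 (by omega)
  have h1 : (leadB (u.submatrix id Fin.rev) k).submatrix e e =
      (Matrix.of fun i j : Fin (k : ℕ) =>
    if h : (i : ℕ) < d ∧ d - k + (j : ℕ) < d then u ⟨i, h.1⟩ ⟨d - k + j, h.2⟩ else 0).submatrix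
      id Fin.revPerm := by
    ext i j
    have hi := i.2
    have hj := j.2
    simp only [leadB, Matrix.submatrix_apply, id, Matrix.of_apply, e, Equiv.coe_fn_mk,
      Fin.revPerm_apply]
    rw [dif_pos (by rw [Fin.val_rev]; omega)]
    congr 1
    ext
    simp only [Fin.val_rev]
    omega
  rw [h1, Matrix.det_permute']
  refine mul_ne_zero ?_ hc
  rcases Int.units_eq_one_or (Equiv.Perm.sign (Fin.revPerm : Equiv.Perm (Fin (k : ℕ)))) with h | h <;>
    simp [h]

theorem sset_upper {d : ℕ} {u : Matrix (Fin d) (Fin d) ℝ} (hu : u ∈ Sset d) (i j : Fin d)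
    (h : j < i) : u i j = 0 := hu.1.1 i j h

theorem sset_det {d : ℕ} {u : Matrix (Fin d) (Fin d) ℝ} (hu : u ∈ Sset d) : u.det = 1 := by
  rw [det_upper (sset_upper hu)]
  exact Finset.prod_eq_one fun i _ => hu.1.2 i

theorem antiM_orth {d : ℕ} (ε : Fin d → ℝ) (hε : ∀ i, ε i * ε i = 1) :
    antiM ε ∈ Matrix.orthogonalGroup (Fin d) ℝ := by
  rw [Matrix.mem_orthogonalGroup_iff]
  change antiM ε * (antiM ε)ᵀ = 1
  ext i j
  rw [Matrix.mul_apply, Fintype.sum_eq_single (Fin.rev i)]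
  · simp only [antiM, Matrix.of_apply, Matrix.transpose_apply, if_true, Fin.rev_inj,
      Matrix.one_apply]
    split_ifs with h
    · rw [h, hε]
    · rw [mul_zero]
  · intro x hx
    simp [antiM, hx]

theorem antiM_mul_apply {d : ℕ} (ε : Fin d → ℝ) (M : Matrix (Fin d) (Fin d) ℝ) (i j : Fin d) :
    (antiM ε * M) i j = ε i * M (Fin.rev i) j := by
  rw [Matrix.mul_apply, Fintype.sum_eq_single (Fin.rev i)]
  · simp [antiM]
  · intro x hx
    simp [antiM, hx]

theorem mul_antiM_apply {d : ℕ} (ε : Fin d → ℝ) (M : Matrix (Fin d) (Fin d) ℝ) (i j : Fin d) :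
    (M * antiM ε) i j = M i (Fin.rev j) * ε (Fin.rev j) := by
  rw [Matrix.mul_apply, Fintype.sum_eq_single (Fin.rev j)]
  · simp [antiM]
  · intro x hx
    have : ¬ j = Fin.rev x := fun h => hx (by rw [h, Fin.rev_rev])
    simp [antiM, this]

theorem exists_bruhat (d : ℕ) : ∃ (ε : Sset d → Fin d → ℝ) (l1 l2 : Sset d → lowG d),
    Continuous ε ∧ Continuous l2 ∧ (∀ u i, ε u i * ε u i = 1) ∧
    ∀ u, u.1 = (l1 u).1.1 * antiM (ε u) * (l2 u).1.1 := by
  let N : Sset d → Matrix (Fin d) (Fin d) ℝ := fun u => elimN (u.1.submatrix id Fin.rev)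
  let B : Sset d → Matrix (Fin d) (Fin d) ℝ := fun u => N u * u.1.submatrix id Fin.rev
  have hAc : Continuous fun u : Sset d => u.1.submatrix id Fin.rev :=
    continuous_subtype_val.matrix_submatrix _ _
  have hBc : Continuous B :=
    (elimN_continuous _ hAc fun u k => leadB_rev_det u.1 u.2 k).matrix_mul hAc
  have hBu : ∀ u i j, j < i → B u i j = 0 := fun u i j h =>
    elimN_mul _ i j h (leadB_rev_det u.1 u.2 i)
  have hBN : ∀ u i j, (N u * u.1) i j = B u i (Fin.rev j) := by
    intro u i j
    simp only [B, Matrix.mul_apply, Matrix.submatrix_apply, id, Fin.rev_rev]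
  have hBdet : ∀ u, (B u).det ≠ 0 := by
    intro u
    have : u.1.submatrix id Fin.rev = u.1.submatrix id (Fin.revPerm : Equiv.Perm (Fin d)) := rfl
    simp only [B, N]
    rw [Matrix.det_mul, elimN_det, one_mul, this, Matrix.det_permute', sset_det u.2, mul_one]
    rcases Int.units_eq_one_or (Equiv.Perm.sign (Fin.revPerm : Equiv.Perm (Fin d))) with h | h <;>
      simp [h]
  have hβ : ∀ u i, B u i i ≠ 0 := by
    intro u i h
    refine hBdet u ?_
    rw [det_upper (hBu u)]
    exact Finset.prod_eq_zero (Finset.mem_univ i) h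
  let ε : Sset d → Fin d → ℝ := fun u i => B u i i / |B u i i|
  have hεc : Continuous ε := by
    refine continuous_pi fun i => ?_
    have := hBc.matrix_elem i i
    exact this.div this.abs fun u => abs_ne_zero.2 (hβ u i)
  have hε : ∀ u i, ε u i * ε u i = 1 := by
    intro u i
    have := abs_ne_zero.2 (hβ u i)
    simp only [ε]
    rw [div_mul_div_comm, abs_mul_abs_self]
    exact div_self (mul_ne_zero (hβ u i) (hβ u i))
  let M : Sset d → Matrix (Fin d) (Fin d) ℝ := fun u =>
    Matrix.of fun i j => ε u (Fin.rev i) * B u (Fin.rev i) (Fin.rev j)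
  have hM1 : ∀ u i j, i < j → M u i j = 0 := by
    intro u i j h
    simp only [M, Matrix.of_apply]
    rw [hBu u _ _ (Fin.rev_lt_rev.2 h), mul_zero]
  have hM2 : ∀ u i, 0 < M u i i := by
    intro u i
    simp only [M, Matrix.of_apply, ε]
    rw [div_mul_eq_mul_div]
    exact div_pos (mul_self_pos.2 (hβ u _)) (abs_pos.2 (hβ u _))
  have hMdet : ∀ u, (M u).det ≠ 0 := by
    intro u
    rw [det_lower (hM1 u)]
    exact (Finset.prod_pos fun i _ => hM2 u i).ne'
  have hMc : Continuous M := continuous_matrix fun i j =>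
    ((continuous_apply _).comp hεc).mul (hBc.matrix_elem _ _)
  have hN : ∀ u, (N u).det ≠ 0 := fun u => by
    simp only [N, elimN_det]; exact one_ne_zero
  let n : Sset d → lowG d := fun u => ⟨Matrix.GeneralLinearGroup.mkOfDetNeZero (N u) (hN u),
    fun i j h => elimN_upper _ i j h, fun i => by
      change 0 < elimN _ i i
      rw [elimN_diag]; exact one_pos⟩
  refine ⟨ε, fun u => (n u)⁻¹,
    fun u => ⟨Matrix.GeneralLinearGroup.mkOfDetNeZero (M u) (hMdet u), hM1 u, hM2 u⟩,
    hεc, ?_, hε, ?_⟩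
  · exact Continuous.subtype_mk (continuous_gl _ hMc) _
  · intro u
    have h1 : (n u).1.1 * u.1 = antiM (ε u) * M u := by
      ext i j
      rw [antiM_mul_apply]
      simp only [M, Matrix.of_apply, Fin.rev_rev]
      rw [← mul_assoc, hε, one_mul]
      exact hBN u i j
    have h2 : ((n u)⁻¹).1.1 * (n u).1.1 = 1 := by
      rw [← Units.val_mul, ← Subgroup.coe_mul, inv_mul_cancel]; rfl
    change u.1 = ((n u)⁻¹).1.1 * antiM (ε u) * M u
    rw [Matrix.mul_assoc, ← h1, ← Matrix.mul_assoc, h2, Matrix.one_mul]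

end Bruhat

section Assembly

open Matrix

/-- An element of `S_d` as an element of the unipotent subgroup. -/
noncomputable def toUni {d : ℕ} (u : Sset d) : uniG d :=
  ⟨Matrix.GeneralLinearGroup.mkOfDetNeZero u.1 (by rw [sset_det u.2]; exact one_ne_zero),
    fun i j h => sset_upper u.2 i j h, fun i => u.2.1.2 i⟩

theorem toUni_val {d : ℕ} (u : Sset d) : (toUni u).1.1 = u.1 := rfl

theorem toUni_continuous (d : ℕ) : Continuous (toUni (d := d)) :=
  Continuous.subtype_mk (continuous_gl _ continuous_subtype_val) _

theorem exists_diag_path {d : ℕ} (m : lowG d) (hm : ∀ i j, i ≠ j → m.1.1 i j = 0) :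
    ∃ γ : unitInterval → lowG d, Continuous γ ∧ γ 0 = 1 ∧ γ 1 = m ∧
      ∀ t, ∃ w : Fin d → ℝ, (∀ i, 0 < w i) ∧ (γ t).1.1 = Matrix.diagonal w := by
  let w : unitInterval → Fin d → ℝ := fun t i => (1 - (t : ℝ)) + t * m.1.1 i i
  have hw : ∀ t i, 0 < w t i := by
    intro t i
    have := m.2.2 i
    have t0 := t.2.1
    have t1 := t.2.2
    simp only [w]
    rcases t0.eq_or_lt with h0 | h0
    · rw [← h0]; norm_num
    · nlinarith [mul_pos h0 this]
  have hdet : ∀ t, (Matrix.diagonal (w t)).det ≠ 0 := fun t => by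
    rw [Matrix.det_diagonal]
    exact (Finset.prod_pos fun i _ => hw t i).ne'
  refine ⟨fun t => ⟨Matrix.GeneralLinearGroup.mkOfDetNeZero _ (hdet t),
    fun i j h => Matrix.diagonal_apply_ne _ h.ne, fun i => ?_⟩, ?_, ?_, ?_, ?_⟩
  · change 0 < Matrix.diagonal (w t) i i
    rw [Matrix.diagonal_apply_eq]; exact hw t i
  · refine Continuous.subtype_mk (continuous_gl _ ?_) _
    change Continuous fun t => Matrix.diagonal (w t)
    refine Continuous.matrix_diagonal (continuous_pi fun i => ?_)
    simp only [w]
    fun_prop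
  · refine Subtype.ext (Units.ext ?_)
    change Matrix.diagonal (w 0) = 1
    rw [← Matrix.diagonal_one]
    congr 1
    ext i
    simp [w]
  · refine Subtype.ext (Units.ext ?_)
    change Matrix.diagonal (w 1) = m.1.1
    ext i j
    by_cases h : i = j
    · subst h; simp [w]
    · rw [Matrix.diagonal_apply_ne _ h, hm i j h]
  · intro t
    exact ⟨w t, hw t, rfl⟩

theorem lowG_det_pos {d : ℕ} (l : lowG d) : 0 < l.1.1.det := by
  rw [det_lower l.2.1]
  exact Finset.prod_pos fun i _ => l.2.2 i

theorem sset_preconnected {d : ℕ} (u : Matrix (Fin d) (Fin d) ℝ) :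
    IsPreconnected ((Subtype.val : Sset d → _) ⁻¹' connectedComponentIn (Sset d) u) := by
  rw [← Topology.IsInducing.subtypeVal.isPreconnected_image, Subtype.image_preimage_coe,
    Set.inter_eq_right.2 (connectedComponentIn_subset _ _)]
  exact isPreconnected_connectedComponentIn

end Assembly

theorem inversion_swaps_components (d : ℕ) (hd5 : d ≠ 5)
    (hd : d % 8 = 2 ∨ d % 8 = 3 ∨ d % 8 = 4 ∨ d % 8 = 5 ∨ d % 8 = 6)
    (u : Matrix (Fin d) (Fin d) ℝ) (hu : u ∈ Sset d) :
    u⁻¹ ∉ connectedComponentIn (Sset d) u := by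
  intro hinv
  obtain ⟨q, hqc, hqL⟩ := exists_gs d
  obtain ⟨F, c, hFc, hcc, hF, hc, hc1, hcm, hFinv⟩ := exists_lifts (pinProj d)
    (pinProj_isCoveringMap d) (orthGL d) (orthGL_continuous d) q hqc (lowG d) (uniG d) hqL
    (orthGL_low d) (lowG_contracts d) (uniG_contracts d)
  obtain ⟨ε, l1, l2, hεc, hl2c, hε, hfac⟩ := exists_bruhat d
  let z : Sset d → Orth (Fin d) := fun x => ⟨antiM (ε x), antiM_orth _ (hε x)⟩
  have hfac' : ∀ x, (toUni x : GL (Fin d) ℝ) = l1 x * orthGL d (z x) * l2 x := fun x =>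
    Units.ext (hfac x)
  let ζ : Sset d → PinG d := fun x => c (F (toUni x), (l2 x)⁻¹)
  have hζc : Continuous ζ :=
    hcc.comp ((hFc.comp (toUni_continuous d)).prodMk hl2c.inv)
  have hζz : ∀ x, pinProj d (ζ x) = z x := by
    intro x
    simp only [ζ]
    rw [hc, hF]
    have h1 := hqL (toUni x)
    have e : orthGL d (q (toUni x)) * ((l2 x)⁻¹ : lowG d) =
        ((toUni x : GL (Fin d) ℝ) * (orthGL d (q (toUni x)))⁻¹)⁻¹ * l1 x * orthGL d (z x) := by
      have e1 : orthGL d (z x) = (l1 x : GL (Fin d) ℝ)⁻¹ * toUni x * (l2 x : GL (Fin d) ℝ)⁻¹ := by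
        rw [hfac' x]; group
      rw [e1, Subgroup.coe_inv]; group
    rw [e]
    exact q_of_mul (orthGL d) q (lowG d) hqL (orthGL_low d) _
      ((lowG d).mul_mem ((lowG d).inv_mem h1) (l1 x).2) _
  have hFζ : ∀ x, F (toUni x) = c (ζ x, l2 x) := by
    intro x
    simp only [ζ]
    rw [hcm, inv_mul_cancel, hc1]
  let x : Sset d := ⟨u, hu⟩
  let y : Sset d := ⟨u⁻¹, connectedComponentIn_subset _ _ hinv⟩
  have hC := sset_preconnected u
  have hx : x ∈ ((Subtype.val : Sset d → _) ⁻¹' connectedComponentIn (Sset d) u) :=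
    mem_connectedComponentIn hu
  have hy : y ∈ ((Subtype.val : Sset d → _) ⁻¹' connectedComponentIn (Sset d) u) := hinv
  have hζ : ζ x = ζ y := by
    refine (pinProj_isCoveringMap d).constOn_of_comp hC hζc.continuousOn ?_ hx hy
    intro a ha b hb
    rw [hζz, hζz]
    have : ε a = ε b := by
      funext i
      have hci : Continuous fun v => ε v i := (continuous_apply i).comp hεc
      have := hC.eq_one_or_eq_neg_one_of_sq_eq (f := fun v => ε v i) hci.continuousOn
        (fun v _ => by simp [sq, hε])
      rcases this with h | h
      · exact (h ha).trans (h hb).symm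
      · exact (h ha).trans (h hb).symm
    exact Subtype.ext (by simp only [z, this])
  have hyx : toUni y = (toUni x)⁻¹ := by
    refine Subtype.ext (Units.ext ?_)
    rw [Subgroup.coe_inv, Matrix.coe_units_inv]
    rfl
  have h1 : F (toUni x)⁻¹ = c ((ζ x)⁻¹, (l1 x)⁻¹) :=
    hFinv _ (l1 x) (l2 x) (ζ x) (by rw [hζz]; exact hfac' x) (hFζ x)
  rw [← hyx, hFζ y, ← hζ] at h1
  have h2 : c (ζ x, l2 y * l1 x) = (ζ x)⁻¹ := by
    rw [← hcm, h1, hcm, inv_mul_cancel, hc1]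
  set m : lowG d := l2 y * l1 x with hm
  have h3 : q (orthGL d (z x) * m) = (z x)⁻¹ := by
    rw [← hζz x, ← hc, h2, map_inv]
  have h4 := hqL (orthGL d (z x) * m)
  rw [h3, map_inv, inv_inv] at h4
  have hε0 : ∀ i, ε x i ≠ 0 := fun i h => by
    have := hε x i
    rw [h] at this
    norm_num at this
  have hmd : ∀ i j, i ≠ j → m.1.1 i j = 0 := by
    intro i j hij
    rcases lt_or_gt_of_ne hij with h | h
    · exact m.2.1 i j h
    · have h5 := h4.1 (Fin.rev i) (Fin.rev j) (Fin.rev_lt_rev.2 h)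
      change (antiM (ε x) * m.1.1 * antiM (ε x)) _ _ = 0 at h5
      rw [mul_antiM_apply, antiM_mul_apply] at h5
      simp only [Fin.rev_rev, mul_eq_zero, hε0, or_false, false_or] at h5
      exact h5
  obtain ⟨γ, hγc, hγ0, hγ1, hγ⟩ := exists_diag_path m hmd
  have h6 : c (ζ x, γ 1) = c (ζ x, γ 0) := by
    refine (pinProj_isCoveringMap d).const_of_comp (g := fun t => c (ζ x, γ t))
      (hcc.comp (continuous_const.prodMk hγc)) ?_ 1 0
    have : ∀ t, pinProj d (c (ζ x, γ t)) = z x := by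
      intro t
      rw [hc, hζz]
      obtain ⟨w, hw, hγw⟩ := hγ t
      have e : orthGL d (z x) * γ t = (orthGL d (z x) * γ t * orthGL d (z x)⁻¹) *
          orthGL d (z x) := by
        rw [map_inv]; group
      rw [e]
      refine q_of_mul (orthGL d) q (lowG d) hqL (orthGL_low d) _ ?_ _
      have e2 : ∀ i j, (orthGL d (z x) * (γ t : GL (Fin d) ℝ) * orthGL d (z x)⁻¹).1 i j =
          ε x i * (w (Fin.rev i) * if i = j then ε x j else 0) := by
        intro i j
        change (antiM (ε x) * (γ t).1.1 * (antiM (ε x)).transpose) i j = _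
        rw [Matrix.mul_assoc, antiM_mul_apply, hγw, Matrix.diagonal_mul, Matrix.transpose_apply]
        simp [antiM, Fin.rev_inj]
      refine ⟨fun i j h => ?_, fun i => ?_⟩
      · rw [e2, if_neg h.ne, mul_zero, mul_zero]
      · rw [e2, if_pos rfl]
        have := hε x i
        have hwi := hw (Fin.rev i)
        nlinarith
    intro a b
    rw [this a, this b]
  rw [hγ1, hγ0, h2, hc1] at h6
  have hdet : (antiM (ε x)).det = 1 := by
    have h7 := congrArg Matrix.det (hfac x)
    rw [Matrix.det_mul, Matrix.det_mul, sset_det x.2] at h7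
    have h8 := orth_det_sq (z x)
    change (antiM (ε x)).det * (antiM (ε x)).det = 1 at h8
    rcases mul_self_eq_one_iff.1 h8 with h | h
    · exact h
    · rw [h] at h7
      nlinarith [mul_pos (lowG_det_pos (l1 x)) (lowG_det_pos (l2 x))]
  refine pin_sq_ne_one d hd (ζ x) (ε x) (hε x) ?_ hdet ?_
  · have := congrArg Subtype.val (hζz x)
    rwa [pinProj_apply] at this
  · nth_rewrite 1 [← h6]
    exact inv_mul_cancel _
end

section
/- Let W = {(x,y,z) ∈ ℝ³ : y ≠ 0 and xz − y ≠ 0}, with the subspace topology from ℝ³. Define the six subsets Ω₁ = {x>0, y>0, z>0, xz−y>0}, Ω̂₁ = {x<0, y>0, z<0, xz−y>0}, Ω₂ = {x<0, y<0, z>0, xz−y<0}, Ω̂₂ = {x>0, y<0, z<0, xz−y<0}, Ω₃ = {y>0, xz−y<0}, Ω̂₃ = {y<0, xz−y>0}. Then these six sets are pairwise disjoint, their union is W, and each of them is a connected component of W. -/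
/-- `W = {(x,y,z) ∈ ℝ³ : y ≠ 0 and xz − y ≠ 0}`. -/
def Wset : Set (ℝ × ℝ × ℝ) :=
  {p | p.2.1 ≠ 0 ∧ p.1 * p.2.2 - p.2.1 ≠ 0}

/-- The six candidate components `Ω₁, Ω̂₁, Ω₂, Ω̂₂, Ω₃, Ω̂₃` (in this order). -/
def OmegaSets : Fin 6 → Set (ℝ × ℝ × ℝ) :=
  ![{p | 0 < p.1 ∧ 0 < p.2.1 ∧ 0 < p.2.2 ∧ 0 < p.1 * p.2.2 - p.2.1},
    {p | p.1 < 0 ∧ 0 < p.2.1 ∧ p.2.2 < 0 ∧ 0 < p.1 * p.2.2 - p.2.1},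
    {p | p.1 < 0 ∧ p.2.1 < 0 ∧ 0 < p.2.2 ∧ p.1 * p.2.2 - p.2.1 < 0},
    {p | 0 < p.1 ∧ p.2.1 < 0 ∧ p.2.2 < 0 ∧ p.1 * p.2.2 - p.2.1 < 0},
    {p | 0 < p.2.1 ∧ p.1 * p.2.2 - p.2.1 < 0},
    {p | p.2.1 < 0 ∧ 0 < p.1 * p.2.2 - p.2.1}]

lemma omega_isOpen (a : Fin 6) : IsOpen (OmegaSets a) := by
  fin_cases a <;> simp only [OmegaSets] <;> dsimp <;>
  simp only [Set.setOf_and] <;>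
  repeat' first
    | apply IsOpen.inter
    | (apply isOpen_lt <;> fun_prop)

lemma omega_disj : Pairwise (Function.onFun Disjoint OmegaSets) := by
  intro a b hab
  rw [Function.onFun, Set.disjoint_left]
  rintro ⟨x, y, z⟩ h1 h2
  fin_cases a <;> fin_cases b <;> simp [OmegaSets] at h1 h2 hab <;> linarith

lemma omega_union : (⋃ a : Fin 6, OmegaSets a) = Wset := by
  ext ⟨x, y, z⟩
  simp only [Set.mem_iUnion]
  constructor
  · rintro ⟨a, h⟩
    fin_cases a <;> simp only [OmegaSets] at h <;> dsimp at h <;>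
      constructor <;> dsimp <;> intro h0 <;> linarith
  · rintro ⟨hy, hw⟩
    dsimp at hy hw
    rcases lt_or_gt_of_ne hy with hy | hy <;> rcases lt_or_gt_of_ne hw with hw | hw
    · have : x * z < 0 := by linarith
      rcases mul_neg_iff.1 this with ⟨h1, h2⟩ | ⟨h1, h2⟩
      · exact ⟨3, h1, hy, h2, hw⟩
      · exact ⟨2, h1, hy, h2, hw⟩
    · exact ⟨5, hy, hw⟩
    · exact ⟨4, hy, hw⟩
    · have : 0 < x * z := by linarith
      rcases mul_pos_iff.1 this with ⟨h1, h2⟩ | ⟨h1, h2⟩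
      · exact ⟨0, h1, hy, h2, hw⟩
      · exact ⟨1, h1, hy, h2, hw⟩

lemma image_preconn (A B : Set ℝ) (hA : Convex ℝ A) (hB : Convex ℝ B) (h0 : ∀ x ∈ A, x ≠ 0)
    (S : Set (ℝ × ℝ × ℝ))
    (hS : ∀ x y z, (x, y, z) ∈ S ↔ x ∈ A ∧ y ∈ B ∧ x * z - y ∈ B) : IsPreconnected S := by
  have hc : IsPreconnected (A ×ˢ (B ×ˢ B)) := (hA.prod (hB.prod hB)).isPreconnected
  have := hc.image (fun q : ℝ × ℝ × ℝ => (q.1, q.2.1, (q.2.1 + q.2.2) / q.1)) (by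
    refine ContinuousOn.prodMk (by fun_prop) (ContinuousOn.prodMk (by fun_prop) ?_)
    exact ContinuousOn.div (by fun_prop) (by fun_prop) (fun q hq => h0 _ hq.1))
  convert this using 1
  ext ⟨x, y, z⟩
  rw [hS]
  constructor
  · rintro ⟨h1, h2, h3⟩
    refine ⟨(x, y, x * z - y), ⟨h1, h2, h3⟩, ?_⟩
    have := h0 x h1
    simp only [Prod.mk.injEq, true_and]
    field_simp
    ring
  · rintro ⟨⟨x', y', w'⟩, ⟨h1, h2, h3⟩, h⟩
    simp only [Prod.mk.injEq] at h
    obtain ⟨rfl, rfl, rfl⟩ := h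
    have := h0 _ h1
    refine ⟨h1, h2, ?_⟩
    dsimp at *
    rw [mul_div_cancel₀ _ this]
    simpa using h3

lemma star_preconn (S : Set (ℝ × ℝ × ℝ)) (e : ℝ) (hb : (0, e, 0) ∈ S)
    (hS : ∀ x y z t, (x, y, z) ∈ S → 0 ≤ t → t ≤ 1 →
      (t * x, t ^ 2 * y + (1 - t ^ 2) * e, t * z) ∈ S) : IsPreconnected S := by
  refine isPreconnected_of_forall (0, e, 0) ?_
  rintro ⟨x, y, z⟩ h
  refine ⟨(fun t : ℝ => (t * x, t ^ 2 * y + (1 - t ^ 2) * e, t * z)) '' Set.Icc 0 1,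
    ?_, ⟨0, by simp, by simp⟩, ⟨1, by simp, by simp⟩, ?_⟩
  · rintro _ ⟨t, ht, rfl⟩
    exact hS x y z t h ht.1 ht.2
  · exact isPreconnected_Icc.image _ (by fun_prop)

lemma omega_preconn (a : Fin 6) : IsPreconnected (OmegaSets a) := by
  have pos0 : ∀ x ∈ Set.Ioi (0 : ℝ), x ≠ 0 := fun x hx => ne_of_gt hx
  have neg0 : ∀ x ∈ Set.Iio (0 : ℝ), x ≠ 0 := fun x hx => ne_of_lt hx
  have cp := convex_Ioi (𝕜 := ℝ) (0 : ℝ)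
  have cn := convex_Iio (𝕜 := ℝ) (0 : ℝ)
  fin_cases a
  · refine image_preconn _ _ cp cp pos0 _ fun x y z => ?_
    simp only [OmegaSets, Set.mem_Ioi]
    dsimp
    refine ⟨fun h => ⟨h.1, h.2.1, h.2.2.2⟩, fun h => ⟨h.1, h.2.1, ?_, h.2.2⟩⟩
    exact (pos_iff_pos_of_mul_pos (show 0 < x * z by linarith)).1 h.1
  · refine image_preconn _ _ cn cp neg0 _ fun x y z => ?_
    simp only [OmegaSets, Set.mem_Ioi, Set.mem_Iio]
    dsimp
    refine ⟨fun h => ⟨h.1, h.2.1, h.2.2.2⟩, fun h => ⟨h.1, h.2.1, ?_, h.2.2⟩⟩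
    by_contra hz
    nlinarith [mul_nonneg (neg_nonneg.2 h.1.le) (not_lt.1 hz)]
  · refine image_preconn _ _ cn cn neg0 _ fun x y z => ?_
    simp only [OmegaSets, Set.mem_Iio]
    dsimp
    refine ⟨fun h => ⟨h.1, h.2.1, h.2.2.2⟩, fun h => ⟨h.1, h.2.1, ?_, h.2.2⟩⟩
    by_contra hz
    nlinarith [mul_nonneg (neg_nonneg.2 h.1.le) (neg_nonneg.2 (not_lt.1 hz))]
  · refine image_preconn _ _ cp cn pos0 _ fun x y z => ?_
    simp only [OmegaSets, Set.mem_Ioi, Set.mem_Iio]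
    dsimp
    refine ⟨fun h => ⟨h.1, h.2.1, h.2.2.2⟩, fun h => ⟨h.1, h.2.1, ?_, h.2.2⟩⟩
    by_contra hz
    nlinarith [mul_nonneg h.1.le (not_lt.1 hz)]
  · refine star_preconn _ 1 (by simp [OmegaSets]) ?_
    intro x y z t h h0 h1
    simp only [OmegaSets] at h ⊢
    dsimp at h ⊢
    obtain ⟨hy, hw⟩ := h
    rcases h0.eq_or_lt with rfl | ht
    · norm_num
    have h2 : 0 < t ^ 2 := by positivity
    have h3 : t ^ 2 ≤ 1 := pow_le_one₀ h0 h1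
    constructor
    · nlinarith [mul_pos h2 hy]
    · nlinarith [mul_pos h2 (neg_pos.2 hw)]
  · refine star_preconn _ (-1) (by simp [OmegaSets]) ?_
    intro x y z t h h0 h1
    simp only [OmegaSets] at h ⊢
    dsimp at h ⊢
    obtain ⟨hy, hw⟩ := h
    rcases h0.eq_or_lt with rfl | ht
    · norm_num
    have h2 : 0 < t ^ 2 := by positivity
    have h3 : t ^ 2 ≤ 1 := pow_le_one₀ h0 h1
    constructor
    · nlinarith [mul_pos h2 (neg_pos.2 hy)]
    · nlinarith [mul_pos h2 hw]

theorem components_of_W :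
    Pairwise (Function.onFun Disjoint OmegaSets) ∧
    (⋃ a : Fin 6, OmegaSets a) = Wset ∧
    (∀ a : Fin 6, ∀ p ∈ OmegaSets a, connectedComponentIn Wset p = OmegaSets a) := by
  refine ⟨omega_disj, omega_union, fun a p hp => ?_⟩
  have hsub : OmegaSets a ⊆ Wset := omega_union ▸ Set.subset_iUnion OmegaSets a
  refine Set.Subset.antisymm ?_ ((omega_preconn a).subset_connectedComponentIn hp hsub)
  refine IsPreconnected.subset_left_of_subset_union (omega_isOpen a)
    (v := ⋃ b : {b : Fin 6 // b ≠ a}, OmegaSets b) (isOpen_iUnion fun b => omega_isOpen b)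
    ?_ ?_ ⟨p, mem_connectedComponentIn (hsub hp), hp⟩ isPreconnected_connectedComponentIn
  · exact Set.disjoint_iUnion_right.2 fun b => omega_disj b.2.symm
  · intro q hq
    have hq' := connectedComponentIn_subset _ _ hq
    rw [← omega_union] at hq'
    obtain ⟨b, hb⟩ := Set.mem_iUnion.1 hq'
    by_cases h : b = a
    · exact Or.inl (h ▸ hb)
    · exact Or.inr (Set.mem_iUnion.2 ⟨⟨b, h⟩, hb⟩)
end

section
/- Let d ≥ 2 be an integer with d ≡ 2 (mod 4), and let u ∈ U_d. Then p_{d/2}(u⁻¹) = −p_{d/2}(u). Consequently, if p_{d/2}(u) ≠ 0, then u and u⁻¹ lie in different connected components of the set {v ∈ U_d : p_{d/2}(v) ≠ 0}; in particular, if u ∈ S_d, then u⁻¹ does not lie in the connected component of S_d containing u. -/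
lemma corner_half (k : ℕ) (u : Matrix (Fin (k + k)) (Fin (k + k)) ℝ) :
    cornerMinor (k + k) k u = ((u.submatrix finSumFinEquiv finSumFinEquiv).toBlocks₁₂).det := by
  unfold cornerMinor
  congr 1
  ext i j
  have h1 : (i : ℕ) < k + k := by omega
  have h2 : k + k - k + (j : ℕ) < k + k := by omega
  simp only [Matrix.of_apply, Matrix.toBlocks₁₂, Matrix.submatrix_apply,
    finSumFinEquiv_apply_left, finSumFinEquiv_apply_right]
  rw [dif_pos ⟨h1, h2⟩]
  congr 1
  ext
  simp
  omega

lemma corner_inv (k : ℕ) (hk : Odd k) (u : Matrix (Fin (k + k)) (Fin (k + k)) ℝ)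
    (hu : IsUniUpper (k + k) u) :
    cornerMinor (k + k) k u⁻¹ = - cornerMinor (k + k) k u := by
  rw [corner_half, corner_half]
  have hdu : u.det = 1 := by
    rw [Matrix.det_of_upperTriangular (fun i j h => hu.1 i j h)]
    simp [hu.2]
  have huv : u * u⁻¹ = 1 := Matrix.mul_nonsing_inv u (by simp [hdu])
  set U := u.submatrix finSumFinEquiv finSumFinEquiv with hU
  set V := (u⁻¹).submatrix finSumFinEquiv finSumFinEquiv with hV
  have hUV : U * V = 1 := by
    rw [hU, hV, Matrix.submatrix_mul_equiv, huv, Matrix.submatrix_one_equiv]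
  have h21 : U.toBlocks₂₁ = 0 := by
    ext i j
    apply hu.1
    simp
    omega
  have hA : U.toBlocks₁₁.det = 1 := by
    rw [Matrix.det_of_upperTriangular]
    · simp [hU, Matrix.toBlocks₁₁, hu.2]
    · intro i j h
      apply hu.1
      simpa using h
  have hD : U.toBlocks₂₂.det = 1 := by
    rw [Matrix.det_of_upperTriangular]
    · simp [hU, Matrix.toBlocks₂₂, hu.2]
    · intro i j h
      apply hu.1
      simpa using h
  rw [← Matrix.fromBlocks_toBlocks U, ← Matrix.fromBlocks_toBlocks V,
    Matrix.fromBlocks_multiply, ← Matrix.fromBlocks_one, Matrix.fromBlocks_inj, h21] at hUV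
  obtain ⟨-, h12, -, h22⟩ := hUV
  have hS : V.toBlocks₂₂.det = 1 := by
    have := congrArg Matrix.det h22
    simpa [hD] using this
  have h := congrArg Matrix.det (eq_neg_of_add_eq_zero_left h12)
  rw [Matrix.det_neg, Matrix.det_mul, Matrix.det_mul, hA, hS] at h
  simpa [hk.neg_one_pow] using h

lemma corner_continuous (d k : ℕ) : Continuous (cornerMinor d k) := by
  unfold cornerMinor
  apply Continuous.matrix_det
  refine continuous_matrix fun i j => ?_
  simp only [Matrix.of_apply]
  split_ifs
  · exact continuous_id.matrix_elem _ _
  · exact continuous_const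

lemma not_mem_comp {X : Type*} [TopologicalSpace X] (f : X → ℝ) (hf : Continuous f)
    (F : Set X) (hF : ∀ x ∈ F, f x ≠ 0) (x y : X) (hxy : f y = - f x) :
    y ∉ connectedComponentIn F x := by
  intro hy
  have hx : x ∈ F := connectedComponentIn_nonempty_iff.1 ⟨y, hy⟩
  have hxc := mem_connectedComponentIn hx
  have hoc := ((isPreconnected_connectedComponentIn (x := x) (F := F)).image f
    hf.continuousOn).ordConnected
  have h0 : (0 : ℝ) ∈ f '' connectedComponentIn F x := by
    rcases le_total (f x) 0 with h | h
    · exact hoc.out ⟨x, hxc, rfl⟩ ⟨y, hy, rfl⟩ ⟨h, by linarith⟩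
    · exact hoc.out ⟨y, hy, rfl⟩ ⟨x, hxc, rfl⟩ ⟨by linarith, h⟩
  obtain ⟨z, hz, hz0⟩ := h0
  exact hF z (connectedComponentIn_subset _ _ hz) hz0

theorem middle_minor_antisymmetric (d : ℕ) (hd : 2 ≤ d) (h4 : d % 4 = 2)
    (u : Matrix (Fin d) (Fin d) ℝ) (hu : IsUniUpper d u) :
    cornerMinor d (d / 2) u⁻¹ = - cornerMinor d (d / 2) u ∧
    (cornerMinor d (d / 2) u ≠ 0 →
      u⁻¹ ∉ connectedComponentIn {v | IsUniUpper d v ∧ cornerMinor d (d / 2) v ≠ 0} u) ∧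
    (u ∈ Sset d → u⁻¹ ∉ connectedComponentIn (Sset d) u) := by
  have key : cornerMinor d (d / 2) u⁻¹ = - cornerMinor d (d / 2) u := by
    obtain ⟨k, rfl⟩ : ∃ k, d = k + k := ⟨d / 2, by omega⟩
    have e : (k + k) / 2 = k := by omega
    rw [e]
    exact corner_inv k (Nat.odd_iff.2 (by omega)) u hu
  refine ⟨key, fun _ => ?_, fun _ => ?_⟩
  · exact not_mem_comp _ (corner_continuous d (d / 2)) _ (fun x hx => hx.2) _ _ key
  · exact not_mem_comp _ (corner_continuous d (d / 2)) _
      (fun x hx => hx.2 _ (by omega) (by omega)) _ _ key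
end

section
/- Let n ≥ 1 and let t = (t_{ij}) be a family of real numbers indexed by pairs with 1 ≤ i ≤ n and 1 ≤ j ≤ n+1−i. Define u(t) = B_n · B_{n−1} ⋯ B_1, where for each m the block B_m is the ordered product B_m = (I + t_{1,m} E_{1,2})(I + t_{2,m−1} E_{2,3}) ⋯ (I + t_{m,1} E_{m,m+1}) = ∏_{i=1}^{m} (I + t_{i,m+1−i} E_{i,i+1}) with factors taken in order of increasing i. Then u(t)⁻¹ = u(t′), where t′_{ij} = −t_{i, n+2−i−j} for all 1 ≤ i ≤ n, 1 ≤ j ≤ n+1−i. -/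
/-- `E_{i,i+1}`: the `(n+1)×(n+1)` matrix whose only nonzero entry is a `1` in
position `(i, i+1)` (one-based indexing). -/
def elemE (d i : ℕ) : Matrix (Fin d) (Fin d) ℝ :=
  Matrix.of fun a b => if (a : ℕ) + 1 = i ∧ (b : ℕ) = i then 1 else 0

/-- The block `B_m = ∏_{i=1}^{m} (I + t_{i,m+1−i} E_{i,i+1})`, factors in order of
increasing `i`. -/
def blockB (n : ℕ) (t : ℕ → ℕ → ℝ) (m : ℕ) : Matrix (Fin (n + 1)) (Fin (n + 1)) ℝ :=
  ((List.range m).map (fun i' => (1 : Matrix (Fin (n + 1)) (Fin (n + 1)) ℝ)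
      + t (i' + 1) (m - i') • elemE (n + 1) (i' + 1))).prod

/-- `u(t) = B_n · B_{n−1} ⋯ B_1`. -/
def uProd (n : ℕ) (t : ℕ → ℕ → ℝ) : Matrix (Fin (n + 1)) (Fin (n + 1)) ℝ :=
  ((List.range n).map (fun m' => blockB n t (n - m'))).prod

theorem elemE_mul_eq_zero (d i j : ℕ) (h : j ≠ i + 1) : elemE d i * elemE d j = 0 := by
  ext a b
  rw [Matrix.mul_apply]
  apply Finset.sum_eq_zero
  intro c _
  simp only [elemE, Matrix.of_apply]
  split_ifs <;> first | (exfalso; omega) | simp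

theorem prod_reverse_inverse {M : Type*} [Monoid M] (n : ℕ) (f g : ℕ → M)
    (h : ∀ i < n, f i * g (n - 1 - i) = 1) :
    ((List.range n).map f).prod * ((List.range n).map g).prod = 1 := by
  induction n generalizing g with
  | zero => simp
  | succ n ih =>
    rw [List.prod_range_succ, List.prod_range_succ' g]
    have h0 : f n * g 0 = 1 := by simpa using h n (by omega)
    have h1 := ih (fun i => g (i + 1)) (by
      intro i hi
      have := h i (by omega)
      rwa [show n + 1 - 1 - i = n - 1 - i + 1 by omega] at this)
    rw [mul_assoc, ← mul_assoc (f n), h0, one_mul]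
    exact h1

theorem prod_interleave {M : Type*} [Monoid M] (K : ℕ) (D y : ℕ → M)
    (h : ∀ k l, k < l → l < K → Commute (y k) (D l)) :
    ((List.range K).map (fun k => D k * y k)).prod
      = ((List.range K).map D).prod * ((List.range K).map y).prod := by
  induction K with
  | zero => simp
  | succ K ih =>
    rw [List.prod_range_succ, List.prod_range_succ, List.prod_range_succ,
      ih (fun k l hk hl => h k l hk (by omega))]
    have hc : Commute ((List.range K).map y).prod (D K) := by
      apply Commute.list_prod_left
      intro z hz
      obtain ⟨k, hk, rfl⟩ := List.mem_map.1 hz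
      exact h k K (List.mem_range.1 hk) (by omega)
    simp only [mul_assoc]
    rw [← mul_assoc _ (D K) (y K), hc.eq, mul_assoc]

theorem rows_eq_diagonals {M : Type*} [Monoid M] (x : ℕ → ℕ → M)
    (h : ∀ i j k l, i + 2 ≤ j → Commute (x j k) (x i l)) (n : ℕ) :
    ((List.range n).map (fun k => ((List.range (n - k)).map (fun i => x i k)).prod)).prod
      = ((List.range n).map
          (fun m => ((List.range (m + 1)).map (fun k => x (m - k) k)).prod)).prod := by
  induction n with
  | zero => simp
  | succ n ih =>
    rw [List.prod_range_succ
      (fun m => ((List.range (m + 1)).map (fun k => x (m - k) k)).prod), ← ih]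
    have e : ((List.range (n + 1)).map
        (fun k => ((List.range (n + 1 - k)).map (fun i => x i k)).prod))
        = (List.range (n + 1)).map
        (fun k => ((List.range (n - k)).map (fun i => x i k)).prod * x (n - k) k) := by
      apply List.map_congr_left
      intro k hk
      have := List.mem_range.1 hk
      rw [show n + 1 - k = n - k + 1 by omega, List.prod_range_succ]
    rw [e, prod_interleave]
    · congr 1
      rw [List.prod_range_succ]
      simp
    · intro k l hkl hl
      apply Commute.list_prod_right
      intro z hz
      obtain ⟨i, hi, rfl⟩ := List.mem_map.1 hz
      have := List.mem_range.1 hi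
      exact h _ _ _ _ (by omega)

theorem inverse_of_factorization (n : ℕ) (hn : 1 ≤ n) (t : ℕ → ℕ → ℝ) :
    (uProd n t)⁻¹ = uProd n (fun i j => - t i (n + 2 - i - j)) := by
  apply Matrix.inv_eq_right_inv
  have e : uProd n (fun i j => - t i (n + 2 - i - j)) = ((List.range n).map (fun k =>
      ((List.range (n - k)).map (fun i => (1 : Matrix (Fin (n + 1)) (Fin (n + 1)) ℝ)
        + (- t (i + 1) (k + 1)) • elemE (n + 1) (i + 1))).prod)).prod := by
    unfold uProd blockB
    congr 1
    apply List.map_congr_left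
    intro k hk
    have hk := List.mem_range.1 hk
    congr 1
    apply List.map_congr_left
    intro i hi
    have hi := List.mem_range.1 hi
    beta_reduce
    rw [show n + 2 - (i + 1) - (n - k - i) = k + 1 by omega]
  rw [e, rows_eq_diagonals (fun i k => (1 : Matrix (Fin (n + 1)) (Fin (n + 1)) ℝ)
        + (- t (i + 1) (k + 1)) • elemE (n + 1) (i + 1))]
  · unfold uProd
    apply prod_reverse_inverse
    intro m hm
    unfold blockB
    rw [show n - 1 - m + 1 = n - m by omega]
    apply prod_reverse_inverse
    intro i hi
    rw [show n - 1 - m - (n - m - 1 - i) = i by omega,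
      show n - m - 1 - i + 1 = n - m - i by omega]
    simp [mul_add, add_mul, elemE_mul_eq_zero]
  · intro i j k l hij
    have h1 := elemE_mul_eq_zero (n + 1) (i + 1) (j + 1) 
    have h2 := elemE_mul_eq_zero (n + 1) (j + 1) (i + 1) (by omega)
    have h1 := h1 (by omega)
    simp only [Commute, SemiconjBy, mul_add, add_mul, smul_mul_assoc, mul_smul_comm, h1, h2,
      mul_one, one_mul, smul_zero, add_zero]
    abel
end

section
/- Let n ≥ 1, let M ∈ T^n, and let 1 ≤ k ≤ n. Then ⟨ι(M), R_{n+1−k}⟩ = ⟨M, R_k⟩ + k(n+1−k) in 𝔽₂ (where the integer k(n+1−k) is reduced mod 2). Consequently, if M, M′ ∈ T^n satisfy ⟨M, R_k⟩ = ⟨M′, R_k⟩ for all 1 ≤ k ≤ n, then also ⟨ι(M), R_k⟩ = ⟨ι(M′), R_k⟩ for all 1 ≤ k ≤ n; that is, ι maps each coset of the subspace 𝒟ₙ^⊥ = {M ∈ T^n : ⟨M, R_k⟩ = 0 for all k} onto a coset of 𝒟ₙ^⊥. -/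
/-- `M ∈ T^n`: all entries strictly below the diagonal vanish. -/
def UpperTri (n : ℕ) (M : Matrix (Fin n) (Fin n) (ZMod 2)) : Prop :=
  ∀ i j : Fin n, (j : ℕ) < (i : ℕ) → M i j = 0

/-- The involution `ι : T^n → T^n`, `ι(M)_{ij} = M_{(n+1−j)(n+1−i)} + 1` for `i ≤ j`
(one-based indexing; entries below the diagonal remain `0`). -/
def iotaT (n : ℕ) (M : Matrix (Fin n) (Fin n) (ZMod 2)) : Matrix (Fin n) (Fin n) (ZMod 2) :=
  Matrix.of fun i j => if (i : ℕ) ≤ (j : ℕ) then M (Fin.rev j) (Fin.rev i) + 1 else 0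

/-- The height pairing `⟨M, R_k⟩ = ∑_{1 ≤ r ≤ k ≤ s ≤ n} M_{rs}`. -/
def heightPair (n : ℕ) (M : Matrix (Fin n) (Fin n) (ZMod 2)) (k : Fin n) : ZMod 2 :=
  ∑ r : Fin n, ∑ s : Fin n, if r ≤ k ∧ k ≤ s then M r s else 0

/-- The number of pairs `r ≤ k ≤ s`, reduced mod 2. -/
theorem count_pairs (n : ℕ) (k : Fin n) :
    (∑ r : Fin n, ∑ s : Fin n, if r ≤ k ∧ k ≤ s then (1 : ZMod 2) else 0)
      = (((k : ℕ) + 1) * (n - (k : ℕ)) : ℕ) := by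
  have h : ∀ r s : Fin n, (if r ≤ k ∧ k ≤ s then (1 : ZMod 2) else 0)
      = (if r ≤ k then 1 else 0) * (if k ≤ s then 1 else 0) := by
    intro r s
    by_cases h1 : r ≤ k <;> by_cases h2 : k ≤ s <;> simp [h1, h2]
  simp_rw [h]
  rw [← Finset.sum_mul_sum, Finset.sum_boole, Finset.sum_boole]
  have h1 : (Finset.univ.filter fun r : Fin n => r ≤ k) = Finset.Iic k := by ext; simp
  have h2 : (Finset.univ.filter fun r : Fin n => k ≤ r) = Finset.Ici k := by ext; simp
  rw [h1, h2, Fin.card_Iic, Fin.card_Ici, Nat.cast_mul]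

/-- The height relation, valid for every matrix. -/
theorem height_rev (n : ℕ) (M : Matrix (Fin n) (Fin n) (ZMod 2)) (k : Fin n) :
    heightPair n (iotaT n M) (Fin.rev k)
      = heightPair n M k + (((k : ℕ) + 1) * (n - (k : ℕ)) : ℕ) := by
  rw [← count_pairs]
  unfold heightPair
  rw [← Finset.sum_add_distrib, ← Equiv.sum_comp Fin.revPerm]
  simp_rw [← Finset.sum_add_distrib]
  have h : ∀ r : Fin n, (∑ s : Fin n, if Fin.revPerm r ≤ Fin.rev k ∧ Fin.rev k ≤ s then
      iotaT n M (Fin.revPerm r) s else 0) = ∑ s : Fin n,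
      if Fin.revPerm r ≤ Fin.rev k ∧ Fin.rev k ≤ Fin.revPerm s then
      iotaT n M (Fin.revPerm r) (Fin.revPerm s) else 0 := by
    intro r
    exact (Equiv.sum_comp Fin.revPerm _).symm
  simp_rw [h]
  rw [Finset.sum_comm]
  refine Finset.sum_congr rfl fun r _ => Finset.sum_congr rfl fun s _ => ?_
  simp only [Fin.revPerm_apply, Fin.rev_le_rev]
  by_cases hc : r ≤ k ∧ k ≤ s
  · have h3 : ((Fin.rev s : Fin n) : ℕ) ≤ (Fin.rev r : Fin n) :=
      Fin.rev_le_rev.mpr (hc.1.trans hc.2)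
    rw [if_pos hc.symm, if_pos hc, if_pos hc]
    simp only [iotaT, Matrix.of_apply, if_pos h3, Fin.rev_rev]
  · rw [if_neg (fun h => hc h.symm), if_neg hc, if_neg hc, add_zero]

theorem iota_height_relation (n : ℕ) (hn : 1 ≤ n) :
    (∀ M : Matrix (Fin n) (Fin n) (ZMod 2), UpperTri n M → ∀ k : Fin n,
      heightPair n (iotaT n M) (Fin.rev k)
        = heightPair n M k + (((k : ℕ) + 1) * (n - (k : ℕ)) : ℕ)) ∧
    (∀ M M' : Matrix (Fin n) (Fin n) (ZMod 2), UpperTri n M → UpperTri n M' →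
      (∀ k : Fin n, heightPair n M k = heightPair n M' k) →
      ∀ k : Fin n, heightPair n (iotaT n M) k = heightPair n (iotaT n M') k) := by
  refine ⟨fun M _ k => height_rev n M k, fun M M' _ _ h k => ?_⟩
  have h1 := height_rev n M (Fin.rev k)
  have h2 := height_rev n M' (Fin.rev k)
  rw [Fin.rev_rev] at h1 h2
  rw [h1, h2, h]
end

section
/- Let n ≥ 1 and let h : ℐ_n → 𝔽₂ⁿ be the map sending I ∈ ℐ_n to the vector (⟨I, R_1⟩, ⟨I, R_2⟩, …, ⟨I, R_n⟩). Then the image of h is exactly the set of vectors v ∈ 𝔽₂ⁿ that are symmetric with respect to their middle, i.e. satisfy v_k = v_{n+1−k} for all 1 ≤ k ≤ n. -/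
/-- `E_k ∈ T^n`: the matrix whose `(r,s)`-entry is `1` exactly when `s − r = k − 1`
(one-based indexing). -/
def matE (n : ℕ) (k : Fin n) : Matrix (Fin n) (Fin n) (ZMod 2) :=
  Matrix.of fun r s => if (s : ℕ) = (r : ℕ) + (k : ℕ) then 1 else 0

/-- `ℐ_n`: the `𝔽₂`-linear span of `E_1, …, E_n`. -/
def spanI (n : ℕ) : Submodule (ZMod 2) (Matrix (Fin n) (Fin n) (ZMod 2)) :=
  Submodule.span (ZMod 2) (Set.range (matE n))

/-- The height vector as a linear map. -/
def heightLin (n : ℕ) : Matrix (Fin n) (Fin n) (ZMod 2) →ₗ[ZMod 2] (Fin n → ZMod 2) where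
  toFun M := heightPair n M
  map_add' M N := by
    funext k
    simp only [heightPair, Pi.add_apply, ← Finset.sum_add_distrib]
    refine Finset.sum_congr rfl fun r _ => Finset.sum_congr rfl fun s _ => ?_
    split_ifs <;> simp
  map_smul' c M := by
    funext k
    simp only [heightPair, Pi.smul_apply, Finset.smul_sum, RingHom.id_apply]
    refine Finset.sum_congr rfl fun r _ => Finset.sum_congr rfl fun s _ => ?_
    split_ifs <;> simp

lemma heightPair_matE (n : ℕ) (d k : Fin n) :
    heightPair n (matE n d) k
      = ((min (k : ℕ) (n - 1 - d) + 1 - ((k : ℕ) - d) : ℕ) : ZMod 2) := by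
  have h1 : ∀ r : Fin n, (∑ s : Fin n, if r ≤ k ∧ k ≤ s then matE n d r s else 0)
      = if ((r : ℕ) ≤ k ∧ (k : ℕ) ≤ r + d ∧ (r : ℕ) + d < n) then (1 : ZMod 2) else 0 := by
    intro r
    by_cases hr : (r : ℕ) + d < n
    · rw [Finset.sum_eq_single (⟨r + d, hr⟩ : Fin n)]
      · have e1 : (r ≤ k ∧ k ≤ (⟨r + d, hr⟩ : Fin n)) ↔
            ((r : ℕ) ≤ k ∧ (k : ℕ) ≤ r + d ∧ (r : ℕ) + d < n) :=
          ⟨fun h => ⟨h.1, h.2, hr⟩, fun h => ⟨h.1, h.2.1⟩⟩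
        have e2 : matE n d r ⟨r + d, hr⟩ = 1 := by simp [matE]
        rw [e2]
        exact if_congr e1 rfl rfl
      · intro s _ hs
        have : (s : ℕ) ≠ r + d := fun h => hs (Fin.ext h)
        simp [matE, this]
      · simp
    · rw [if_neg (by tauto)]
      refine Finset.sum_eq_zero fun s _ => ?_
      have : (s : ℕ) ≠ r + d := by omega
      simp [matE, this]
  unfold heightPair
  refine (Finset.sum_congr rfl fun r _ => h1 r).trans ?_
  rw [Fin.sum_univ_eq_sum_range
    (fun r : ℕ => if (r ≤ k ∧ (k : ℕ) ≤ r + d ∧ r + d < n) then (1 : ZMod 2) else 0) n]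
  rw [Finset.sum_boole]
  have : (Finset.range n).filter (fun r : ℕ => r ≤ k ∧ (k : ℕ) ≤ r + d ∧ r + d < n)
      = Finset.Icc ((k : ℕ) - d) (min (k : ℕ) (n - 1 - d)) := by
    ext r
    simp only [Finset.mem_filter, Finset.mem_range, Finset.mem_Icc]
    omega
  rw [this, Nat.card_Icc]

/-- Indicator of the centred interval `[d, n-1-d]`. -/
def indJ (n d : ℕ) : Fin n → ZMod 2 := fun k => if d ≤ (k : ℕ) ∧ (k : ℕ) + d < n then 1 else 0

lemma indJ_mem (n d : ℕ) : indJ n d ∈ (spanI n).map (heightLin n) := by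
  have hE : ∀ e : Fin n, heightLin n (matE n e) ∈ (spanI n).map (heightLin n) := fun e =>
    Submodule.mem_map_of_mem (Submodule.subset_span ⟨e, rfl⟩)
  by_cases hd : 2 * d < n
  · rcases d with _ | d
    · convert hE ⟨0, by omega⟩ using 1
      funext k
      change _ = heightPair n _ k
      rw [heightPair_matE]
      have : min (k : ℕ) (n - 1 - 0) + 1 - ((k : ℕ) - 0) = 1 := by omega
      simp only [this]
      simp [indJ]
    · convert Submodule.sub_mem _ (hE ⟨d + 1, by omega⟩) (hE ⟨d, by omega⟩) using 1
      funext k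
      change _ = heightPair n _ k - heightPair n _ k
      rw [heightPair_matE, heightPair_matE, eq_sub_iff_add_eq]
      simp only [indJ]
      have hk := k.2
      split_ifs with h
      · rw [← Nat.cast_one, ← Nat.cast_add]
        congr 1
        omega
      · rw [zero_add]
        congr 1
        omega
  · have : indJ n d = 0 := by
      funext k
      simp only [indJ, Pi.zero_apply]
      rw [if_neg (by omega)]
    rw [this]
    exact Submodule.zero_mem _

lemma symm_eq (n : ℕ) (v : Fin n → ZMod 2) (hv : ∀ k, v k = v (Fin.rev k)) :
    v = ∑ d : Fin n, (if 2 * (d : ℕ) < n then v d else 0) • (indJ n d - indJ n (d + 1)) := by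
  have key : ∀ k : Fin n, 2 * (k : ℕ) < n → ∀ j : Fin n, (j = k ∨ j = Fin.rev k) →
      (∑ d : Fin n, (if 2 * (d : ℕ) < n then v d else 0) • (indJ n d - indJ n (d + 1))) j
        = v k := by
    intro k hk j hj
    have hj' : (j : ℕ) = k ∨ (j : ℕ) = n - (k + 1) := by
      rcases hj with rfl | rfl
      · exact Or.inl rfl
      · right; simp
    rw [Finset.sum_apply, Finset.sum_eq_single k]
    · simp only [hk, if_true, Pi.smul_apply, Pi.sub_apply, indJ]
      rw [if_pos (by omega), if_neg (by omega)]
      simp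
    · intro d _ hd
      have hd' : (d : ℕ) ≠ k := fun h => hd (Fin.ext h)
      simp only [Pi.smul_apply, Pi.sub_apply, indJ]
      by_cases h2 : 2 * (d : ℕ) < n
      · have : (((d : ℕ) ≤ j ∧ (j : ℕ) + d < n) ↔ ((d : ℕ) + 1 ≤ j ∧ (j : ℕ) + (d + 1) < n)) := by
          omega
        simp only [this, sub_self, smul_zero]
      · simp [h2]
    · simp
  funext j
  by_cases h : 2 * (j : ℕ) < n
  · exact (key j h j (Or.inl rfl)).symm
  · rw [key (Fin.rev j) (by rw [Fin.val_rev]; omega) j (Or.inr (Fin.rev_rev j).symm)]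
    exact hv j

theorem height_image_of_spanI (n : ℕ) (hn : 1 ≤ n) (v : Fin n → ZMod 2) :
    (∃ I ∈ spanI n, ∀ k : Fin n, heightPair n I k = v k) ↔
      (∀ k : Fin n, v k = v (Fin.rev k)) := by
  constructor
  · rintro ⟨I, hI, h⟩ k
    rw [← h, ← h]
    clear h
    change heightLin n I k = heightLin n I (Fin.rev k)
    induction hI using Submodule.span_induction with
    | mem x hx =>
      obtain ⟨d, rfl⟩ := hx
      change heightPair n _ k = heightPair n _ _
      rw [heightPair_matE, heightPair_matE, Fin.val_rev]
      congr 1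
      omega
    | zero => simp
    | add x y _ _ hx hy => simp [hx, hy]
    | smul a x _ hx => simp [hx]
  · intro hv
    have hm : v ∈ (spanI n).map (heightLin n) := by
      rw [symm_eq n v hv]
      exact Submodule.sum_mem _ fun d _ => Submodule.smul_mem _ _
        (Submodule.sub_mem _ (indJ_mem n d) (indJ_mem n (d + 1)))
    obtain ⟨I, hI, h⟩ := hm
    exact ⟨I, hI, fun k => congrFun h k⟩
end

section
/- Let n = 3. For every M ∈ T³, the matrix ι(M) does not belong to the 𝔊₃-orbit of M; that is, the involution ι does not leave invariant any 𝔊₃-orbit in T³. -/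
/-- Safe entry lookup (zero outside range), with zero-based natural-number indices. -/
def ent (n : ℕ) (M : Matrix (Fin n) (Fin n) (ZMod 2)) (r s : ℕ) : ZMod 2 :=
  if h : r < n ∧ s < n then M ⟨r, h.1⟩ ⟨s, h.2⟩ else 0

/-- The generator `g_{ij}` of `𝔊_n` (here `i ≤ j` are zero-based, corresponding to the
one-based indices `i+1 ≤ j+1`): it adds the trace `M_{ij} + M_{i+1,j+1}` of the `2×2`
submatrix with rows `i, i+1` and columns `j, j+1` to each entry of that submatrix lying
in the upper triangle. -/
def gmove (n i j : ℕ) (M : Matrix (Fin n) (Fin n) (ZMod 2)) :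
    Matrix (Fin n) (Fin n) (ZMod 2) :=
  Matrix.of fun r s =>
    if ((r : ℕ) = i ∨ (r : ℕ) = i + 1) ∧ ((s : ℕ) = j ∨ (s : ℕ) = j + 1)
        ∧ (r : ℕ) ≤ (s : ℕ)
    then M r s + (ent n M i j + ent n M (i + 1) (j + 1))
    else M r s

/-- One application of a generator `g_{ij}`, `1 ≤ i ≤ j ≤ n−1` (one-based);
in zero-based indices `i ≤ j` and `j + 2 ≤ n`. -/
def Gstep (n : ℕ) (M M' : Matrix (Fin n) (Fin n) (ZMod 2)) : Prop :=
  ∃ i j : ℕ, i ≤ j ∧ j + 2 ≤ n ∧ M' = gmove n i j M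

/-- `N` belongs to the `𝔊_n`-orbit of `M`: the reflexive-transitive closure of the
generating moves (each generator is an involution, so this is the orbit equivalence). -/
def InOrbit (n : ℕ) (M N : Matrix (Fin n) (Fin n) (ZMod 2)) : Prop :=
  Relation.ReflTransGen (Gstep n) M N

/-- A quadratic invariant of the orbits, which `ι` changes by `1`. -/
def quadInv (M : Matrix (Fin 3) (Fin 3) (ZMod 2)) : ZMod 2 :=
  M 0 0 * M 1 1 + M 0 0 * M 1 2 + M 0 1 * M 1 2 + M 0 1 * M 2 2 + M 1 1 * M 2 2

lemma quadInv_step {M N : Matrix (Fin 3) (Fin 3) (ZMod 2)} (h : Gstep 3 M N) :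
    quadInv N = quadInv M := by
  obtain ⟨i, j, hij, hj, rfl⟩ := h
  have hj' : j ≤ 1 := by omega
  interval_cases j <;> interval_cases i <;>
    simp [quadInv, gmove, ent] <;>
    generalize M 0 0 = a <;> generalize M 0 1 = b <;>
    generalize M 1 1 = d <;> generalize M 1 2 = e <;> generalize M 2 2 = f <;>
    revert a b d e f <;> decide

lemma quadInv_orbit {M N : Matrix (Fin 3) (Fin 3) (ZMod 2)} (h : InOrbit 3 M N) :
    quadInv N = quadInv M := by
  unfold InOrbit at h
  induction h with
  | refl => rfl
  | tail _ hs ih => rw [quadInv_step hs, ih]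

lemma quadInv_iota (M : Matrix (Fin 3) (Fin 3) (ZMod 2)) :
    quadInv (iotaT 3 M) ≠ quadInv M := by
  have r0 : Fin.rev (0 : Fin 3) = 2 := rfl
  have r1 : Fin.rev (1 : Fin 3) = 1 := rfl
  have r2 : Fin.rev (2 : Fin 3) = 0 := rfl
  simp only [quadInv, iotaT, Matrix.of_apply, r0, r1, r2]
  generalize M 0 0 = a
  generalize M 0 1 = b
  generalize M 1 1 = d
  generalize M 1 2 = e
  generalize M 2 2 = f
  revert a b d e f
  decide

theorem iota_preserves_no_orbit_n3 (M : Matrix (Fin 3) (Fin 3) (ZMod 2))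
    (hM : UpperTri 3 M) : ¬ InOrbit 3 M (iotaT 3 M) := by
  intro h
  exact quadInv_iota M (quadInv_orbit h)
end

section
/- Let n ≥ 6 be an even integer with n ≡ 2 or 4 (mod 8). Then for every M ∈ T^n, the matrix ι(M) does not belong to the 𝔊_n-orbit of M; that is, no orbit of the 𝔊_n-action on T^n is left invariant by the involution ι. -/
namespace IotaAux

variable {n : ℕ}

def K (c d : Fin n × Fin n) : ZMod 2 :=
  if c.1.val ≤ d.1.val ∧ d.1.val ≤ c.2.val ∧ c.2.val ≤ d.2.val then 1 else 0

def L (c : Fin n × Fin n) : ZMod 2 :=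
  if c.1.val ≤ c.2.val ∧ (c.2.val - c.1.val) % 2 = 0 then 1 else 0

def Q (x : Fin n × Fin n → ZMod 2) : ZMod 2 :=
  (∑ c, ∑ d, K c d * (x c * x d)) + ∑ c, L c * x c

def H (k : Fin n) (x : Fin n × Fin n → ZMod 2) : ZMod 2 :=
  ∑ c, (if c.1.val ≤ k.val ∧ k.val ≤ c.2.val then 1 else 0) * x c

theorem z2 (a : ZMod 2) : a + a = 0 := CharTwo.add_self_eq_zero a

theorem Q_add (x y : Fin n × Fin n → ZMod 2) :
    Q (fun c => x c + y c) = Q x + Q y + ∑ c, x c * ∑ d, (K c d + K d c) * y d := by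
  have h : ∑ c, x c * ∑ d, (K c d + K d c) * y d
      = (∑ c, ∑ d, K c d * (x c * y d)) + ∑ c, ∑ d, K c d * (y c * x d) := by
    rw [Finset.sum_comm (f := fun c d => K c d * (y c * x d)), ← Finset.sum_add_distrib]
    refine Finset.sum_congr rfl fun c _ => ?_
    rw [Finset.mul_sum, ← Finset.sum_add_distrib]
    refine Finset.sum_congr rfl fun d _ => ?_
    ring
  rw [h]
  unfold Q
  simp only [mul_add, add_mul, Finset.sum_add_distrib]
  ring

theorem Q_congr (x y : Fin n × Fin n → ZMod 2)
    (h : ∀ c : Fin n × Fin n, c.1.val ≤ c.2.val → x c = y c) : Q x = Q y := by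
  unfold Q
  congr 1
  · refine Finset.sum_congr rfl fun c _ => Finset.sum_congr rfl fun d _ => ?_
    unfold K
    split_ifs with h1
    · rw [h c (by omega), h d (by omega)]
    · simp
  · refine Finset.sum_congr rfl fun c _ => ?_
    unfold L
    split_ifs with h1
    · rw [h c (by omega)]
    · simp

theorem H_congr (k : Fin n) (x y : Fin n × Fin n → ZMod 2)
    (h : ∀ c : Fin n × Fin n, c.1.val ≤ c.2.val → x c = y c) : H k x = H k y := by
  unfold H
  refine Finset.sum_congr rfl fun c _ => ?_
  split_ifs with h1
  · rw [h c (by omega)]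
  · simp

/-- the indicator of a two by two block -/
def E (i j : ℕ) (c : Fin n × Fin n) : ZMod 2 :=
  if (c.1.val = i ∨ c.1.val = i + 1) ∧ (c.2.val = j ∨ c.2.val = j + 1) then 1 else 0

theorem sum_E (i j : ℕ) (hi : i + 2 ≤ n) (hj : j + 2 ≤ n) (f : Fin n × Fin n → ZMod 2) :
    ∑ d, f d * E i j d = f (⟨i, by omega⟩, ⟨j, by omega⟩) + f (⟨i, by omega⟩, ⟨j+1, by omega⟩)
      + f (⟨i+1, by omega⟩, ⟨j, by omega⟩) + f (⟨i+1, by omega⟩, ⟨j+1, by omega⟩) := by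
  have hE : ∀ d : Fin n × Fin n, E i j d =
      (if d = (⟨i, by omega⟩, ⟨j, by omega⟩) then 1 else 0)
      + (if d = (⟨i, by omega⟩, ⟨j+1, by omega⟩) then 1 else 0)
      + (if d = (⟨i+1, by omega⟩, ⟨j, by omega⟩) then 1 else 0)
      + (if d = (⟨i+1, by omega⟩, ⟨j+1, by omega⟩) then 1 else 0) := by
    rintro ⟨⟨a, ha⟩, ⟨b, hb⟩⟩
    simp only [E, Prod.mk.injEq, Fin.mk.injEq]
    by_cases h1 : a = i <;> by_cases h2 : a = i + 1 <;> by_cases h3 : b = j <;>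
      by_cases h4 : b = j + 1 <;> first | omega | simp [h1, h2, h3, h4]
  simp only [hE, mul_add, Finset.sum_add_distrib, mul_ite, mul_one, mul_zero, Finset.sum_ite_eq',
    Finset.mem_univ, if_true]

theorem gen_KE {R : Type*} [CommRing R] (h2 : (1 + 1 : R) = 0) (r s i j : ℕ) (hij : i ≤ j) :
    ((if r ≤ i ∧ i ≤ s ∧ s ≤ j then (1 : R) else 0) + if i ≤ r ∧ r ≤ j ∧ j ≤ s then 1 else 0)
    + ((if r ≤ i ∧ i ≤ s ∧ s ≤ j + 1 then 1 else 0) + if i ≤ r ∧ r ≤ j + 1 ∧ j + 1 ≤ s then 1 else 0)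
    + ((if r ≤ i + 1 ∧ i + 1 ≤ s ∧ s ≤ j then 1 else 0) + if i + 1 ≤ r ∧ r ≤ j ∧ j ≤ s then 1 else 0)
    + ((if r ≤ i + 1 ∧ i + 1 ≤ s ∧ s ≤ j + 1 then 1 else 0)
      + if i + 1 ≤ r ∧ r ≤ j + 1 ∧ j + 1 ≤ s then 1 else 0)
    = (if r = i ∧ s = j then 1 else 0) + (if r = i + 1 ∧ s = j + 1 then 1 else 0) := by
  grind (splits := 30)

theorem gen_HE {R : Type*} [CommRing R] (h2 : (1 + 1 : R) = 0) (k i j : ℕ) (hij : i ≤ j) :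
    (if i ≤ k ∧ k ≤ j then (1 : R) else 0) + (if i ≤ k ∧ k ≤ j + 1 then 1 else 0)
    + (if i + 1 ≤ k ∧ k ≤ j then 1 else 0) + (if i + 1 ≤ k ∧ k ≤ j + 1 then 1 else 0) = 0 := by
  grind

theorem K_E (i j : ℕ) (hij : i ≤ j) (hj : j + 2 ≤ n) (c : Fin n × Fin n) :
    ∑ d, (K c d + K d c) * E i j d =
      (if c = (⟨i, by omega⟩, ⟨j, by omega⟩) then 1 else 0)
      + (if c = (⟨i+1, by omega⟩, ⟨j+1, by omega⟩) then 1 else 0) := by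
  rw [sum_E i j (by omega) hj]
  obtain ⟨⟨r, hr⟩, ⟨s, hs⟩⟩ := c
  simp only [K, Prod.mk.injEq, Fin.mk.injEq]
  exact gen_KE (R := ZMod 2) rfl r s i j hij

theorem Q_E (i j : ℕ) (hij : i ≤ j) (hj : j + 2 ≤ n) :
    Q (E i j : Fin n × Fin n → ZMod 2) = 1 := by
  have h : Q (E i j : Fin n × Fin n → ZMod 2)
      = ∑ c : Fin n × Fin n, ((∑ d, K c d * E i j d) + L c) * E i j c := by
    unfold Q
    simp only [add_mul, Finset.sum_add_distrib, Finset.sum_mul]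
    congr 1
    refine Finset.sum_congr rfl fun c _ => Finset.sum_congr rfl fun d _ => ?_
    ring
  rw [h, sum_E i j (by omega) hj]
  simp only [sum_E i j (show i + 2 ≤ n by omega) hj]
  simp only [K, L]
  rcases Nat.eq_or_lt_of_le hij with h | h
  · subst h
    simp
    try decide
  · obtain ⟨m, rfl⟩ := Nat.exists_eq_add_of_lt h
    have e1 : i + m + 1 - i = m + 1 := by omega
    have e2 : i + m + 1 + 1 - i = m + 2 := by omega
    have e3 : i + m + 1 - (i + 1) = m := by omega
    have e4 : i + m + 1 + 1 - (i + 1) = m + 1 := by omega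
    simp only [e1, e2, e3, e4]
    rcases Nat.mod_two_eq_zero_or_one m with hm | hm
    · have f1 : (m + 1) % 2 = 1 := by omega
      have f2 : (m + 2) % 2 = 0 := by omega
      simp [hm, f1, f2, add_assoc]
      try decide
    · have f1 : (m + 1) % 2 = 0 := by omega
      have f2 : (m + 2) % 2 = 1 := by omega
      simp [hm, f1, f2, add_assoc]
      try decide

theorem H_E (k : Fin n) (i j : ℕ) (hij : i ≤ j) (hj : j + 2 ≤ n) :
    H k (E i j : Fin n × Fin n → ZMod 2) = 0 := by
  unfold H
  rw [sum_E i j (by omega) hj]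
  exact gen_HE (R := ZMod 2) rfl k i j hij

def vec (M : Matrix (Fin n) (Fin n) (ZMod 2)) : Fin n × Fin n → ZMod 2 := fun c => M c.1 c.2

theorem move_vec (M : Matrix (Fin n) (Fin n) (ZMod 2)) (i j : ℕ) (t : ZMod 2)
    (ht : t = ent n M i j + ent n M (i + 1) (j + 1)) (c : Fin n × Fin n)
    (hc : c.1.val ≤ c.2.val) :
    vec (gmove n i j M) c = vec M c + t * E i j c := by
  simp only [vec, gmove, Matrix.of_apply, E, ← ht]
  split_ifs <;> first | tauto | simp

theorem Q_step (M N : Matrix (Fin n) (Fin n) (ZMod 2)) (h : Gstep n M N) :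
    Q (vec N) = Q (vec M) := by
  obtain ⟨i, j, hij, hj, rfl⟩ := h
  set t := ent n M i j + ent n M (i + 1) (j + 1) with ht
  rw [Q_congr _ _ (move_vec M i j t ht)]
  have h01 : t = 0 ∨ t = 1 := by
    generalize t = t
    revert t; decide
  rcases h01 with h | h
  · simp [h]
  · rw [h]
    simp only [one_mul]
    rw [Q_add, Q_E i j hij hj]
    simp only [K_E i j hij hj, mul_add, Finset.sum_add_distrib, mul_ite, mul_one, mul_zero,
      Finset.sum_ite_eq', Finset.mem_univ, if_true]
    have : vec M (⟨i, by omega⟩, ⟨j, by omega⟩) + vec M (⟨i+1, by omega⟩, ⟨j+1, by omega⟩) = 1 := by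
      rw [← h, ht]
      simp only [vec, ent]
      rw [dif_pos (by omega), dif_pos (by omega)]
    rw [this, add_assoc, z2, add_zero]

theorem H_step (k : Fin n) (M N : Matrix (Fin n) (Fin n) (ZMod 2)) (h : Gstep n M N) :
    H k (vec N) = H k (vec M) := by
  obtain ⟨i, j, hij, hj, rfl⟩ := h
  set t := ent n M i j + ent n M (i + 1) (j + 1) with ht
  rw [H_congr k _ _ (move_vec M i j t ht)]
  have h1 : H k (fun c => vec M c + t * E i j c) = H k (vec M) + t * H k (E i j) := by
    simp only [H, mul_add, Finset.sum_add_distrib, Finset.mul_sum]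
    congr 1
    refine Finset.sum_congr rfl fun c _ => ?_
    ring
  rw [h1, H_E k i j hij hj, mul_zero, add_zero]

theorem inv_orbit (M N : Matrix (Fin n) (Fin n) (ZMod 2)) (h : InOrbit n M N) :
    Q (vec N) = Q (vec M) ∧ ∀ k, H k (vec N) = H k (vec M) := by
  induction h with
  | refl => exact ⟨rfl, fun _ => rfl⟩
  | tail _ h ih => exact ⟨(Q_step _ _ h).trans ih.1, fun k => (H_step k _ _ h).trans (ih.2 k)⟩

def revE : (Fin n × Fin n) ≃ (Fin n × Fin n) where
  toFun c := (Fin.rev c.2, Fin.rev c.1)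
  invFun c := (Fin.rev c.2, Fin.rev c.1)
  left_inv c := by simp
  right_inv c := by simp

theorem iota_vec (M : Matrix (Fin n) (Fin n) (ZMod 2)) (c : Fin n × Fin n)
    (hc : c.1.val ≤ c.2.val) : vec (iotaT n M) c = vec M (revE c) + 1 := by
  simp only [vec, iotaT, revE, Matrix.of_apply, if_pos hc, Equiv.coe_fn_mk]

theorem K_rev (c d : Fin n × Fin n) : K (revE c) (revE d) = K d c := by
  obtain ⟨⟨r, hr⟩, ⟨s, hs⟩⟩ := c
  obtain ⟨⟨u, hu⟩, ⟨v, hv⟩⟩ := d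
  simp only [K, revE, Equiv.coe_fn_mk, Fin.val_rev]
  congr 1
  apply propext
  omega

theorem L_rev (c : Fin n × Fin n) : L (revE c) = L c := by
  obtain ⟨⟨r, hr⟩, ⟨s, hs⟩⟩ := c
  simp only [L, revE, Equiv.coe_fn_mk, Fin.val_rev]
  congr 1
  apply propext
  omega

theorem Q_rev (x : Fin n × Fin n → ZMod 2) : Q (fun c => x (revE c)) = Q x := by
  unfold Q
  congr 1
  · rw [Finset.sum_comm, ← Equiv.sum_comp revE (fun c => ∑ d, K c d * (x c * x d))]
    refine Finset.sum_congr rfl fun c _ => ?_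
    rw [← Equiv.sum_comp revE (fun d => K (revE c) d * (x (revE c) * x d))]
    refine Finset.sum_congr rfl fun d _ => ?_
    rw [K_rev]; ring
  · rw [← Equiv.sum_comp revE (fun c => L c * x c)]
    simp only [L_rev]

theorem H_rev (k : Fin n) (x : Fin n × Fin n → ZMod 2) :
    H k (fun c => x (revE c)) = H (Fin.rev k) x := by
  unfold H
  rw [← Equiv.sum_comp revE (fun c => _ * x c)]
  refine Finset.sum_congr rfl fun c _ => ?_
  congr 1
  obtain ⟨⟨r, hr⟩, ⟨s, hs⟩⟩ := c
  simp only [revE, Equiv.coe_fn_mk, Fin.val_rev]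
  congr 1
  apply propext
  have := k.isLt
  omega

theorem H_add (k : Fin n) (x y : Fin n × Fin n → ZMod 2) :
    H k (fun c => x c + y c) = H k x + H k y := by
  simp only [H, mul_add, Finset.sum_add_distrib]

theorem sum_Icc (a b : ℕ) (hb : b < n) :
    ∑ u : Fin n, (if a ≤ u.val ∧ u.val ≤ b then (1 : ZMod 2) else 0) = ((b + 1 - a : ℕ) : ZMod 2) := by
  rw [Fin.sum_univ_eq_sum_range (fun u => if a ≤ u ∧ u ≤ b then (1 : ZMod 2) else 0) n,
    Finset.sum_boole]
  congr 1
  rw [← Nat.card_Icc]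
  congr 1
  ext u
  simp only [Finset.mem_filter, Finset.mem_range, Finset.mem_Icc]
  omega

theorem rect (a b p q : ℕ) (hb : b < n) (hq : q < n) :
    ∑ d : Fin n × Fin n, (if (a ≤ d.1.val ∧ d.1.val ≤ b) ∧ (p ≤ d.2.val ∧ d.2.val ≤ q)
      then (1 : ZMod 2) else 0) = ((b + 1 - a : ℕ) : ZMod 2) * ((q + 1 - p : ℕ) : ZMod 2) := by
  rw [← sum_Icc a b hb, ← sum_Icc p q hq, Finset.sum_mul_sum, Fintype.sum_prod_type]
  refine Finset.sum_congr rfl fun u _ => Finset.sum_congr rfl fun v _ => ?_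
  by_cases h1 : a ≤ u.val ∧ u.val ≤ b <;> by_cases h2 : p ≤ v.val ∧ v.val ≤ q <;> simp [h1, h2]

theorem H_one (heven : n % 2 = 0) (k : Fin n) :
    H k (fun _ => 1) = 0 := by
  have hk := k.isLt
  have := rect (n := n) 0 k.val k.val (n - 1) hk (by omega)
  unfold H
  simp only [mul_one]
  trans ((k.val + 1 - 0 : ℕ) : ZMod 2) * ((n - 1 + 1 - k.val : ℕ) : ZMod 2)
  · rw [← this]
    refine Finset.sum_congr rfl fun c _ => ?_
    have := c.2.isLt
    congr 1
    apply propext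
    omega
  · rw [← Nat.cast_mul, ZMod.natCast_eq_zero_iff]
    rcases Nat.even_or_odd k.val with h | h
    · exact Dvd.dvd.mul_left (by rcases h with ⟨m, h⟩; omega) _
    · exact Dvd.dvd.mul_right (by rcases h with ⟨m, h⟩; omega) _

theorem K_row (c : Fin n × Fin n) :
    ∑ d, K c d = ((c.2.val + 1 - c.1.val : ℕ) : ZMod 2) * ((n - c.2.val : ℕ) : ZMod 2) := by
  have h2 := c.2.isLt
  have := rect (n := n) c.1.val c.2.val c.2.val (n - 1) h2 (by omega)
  rw [show n - 1 + 1 - c.2.val = n - c.2.val by omega] at this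
  rw [← this]
  refine Finset.sum_congr rfl fun d _ => ?_
  have := d.2.isLt
  unfold K
  congr 1
  apply propext
  omega

theorem K_col (c : Fin n × Fin n) :
    ∑ d, K d c = ((c.1.val + 1 : ℕ) : ZMod 2) * ((c.2.val + 1 - c.1.val : ℕ) : ZMod 2) := by
  have := rect (n := n) 0 c.1.val c.1.val c.2.val c.1.isLt c.2.isLt
  rw [show c.1.val + 1 - 0 = c.1.val + 1 by omega] at this
  rw [← this]
  refine Finset.sum_congr rfl fun d _ => ?_
  unfold K
  congr 1
  apply propext
  omega

theorem K_both (heven : n % 2 = 0) (c : Fin n × Fin n) :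
    ∑ d, (K c d + K d c) * 1 =
      ∑ k : Fin n, if c.1.val ≤ k.val ∧ k.val ≤ c.2.val then 1 else 0 := by
  simp only [mul_one]
  rw [Finset.sum_add_distrib, K_row, K_col, sum_Icc _ _ c.2.isLt]
  have h2 := c.2.isLt
  rcases le_or_gt c.1.val c.2.val with h | h
  · obtain ⟨m, hm⟩ := Nat.exists_eq_add_of_le h
    have e1 : c.2.val + 1 - c.1.val = m + 1 := by omega
    rw [e1, ← Nat.cast_mul, ← Nat.cast_mul, ← Nat.cast_add, ZMod.natCast_eq_natCast_iff]
    have e2 : (m + 1) * (n - c.2.val) + (c.1.val + 1) * (m + 1)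
      = (m + 1) * ((n - c.2.val) + (c.1.val + 1)) := by ring
    rw [e2]
    show _ % 2 = _ % 2
    have e3 : ((n - c.2.val) + (c.1.val + 1)) % 2 = (m + 1) % 2 := by omega
    rw [Nat.mul_mod, e3]
    rcases Nat.mod_two_eq_zero_or_one (m + 1) with h | h <;> simp [h]
  · have e1 : c.2.val + 1 - c.1.val = 0 := by omega
    simp [e1]

theorem sum_H (heven : n % 2 = 0) (x : Fin n × Fin n → ZMod 2)
    (hx : ∀ k, H (Fin.rev k) x = H k x) : ∑ k, H k x = 0 := by
  refine Finset.sum_involution (fun k _ => Fin.rev k) ?_ ?_ ?_ ?_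
  · intro k _; rw [hx, z2]
  · intro k _ _ h
    have := congrArg Fin.val h
    rw [Fin.val_rev] at this
    have := k.isLt
    omega
  · intro k _; simp
  · intro k _; simp

theorem tri (s : ℕ) : 2 * ∑ d ∈ Finset.range (s + 1), (d + 1) = (s + 1) * (s + 2) := by
  induction s with
  | zero => simp
  | succ s ih => rw [Finset.sum_range_succ, mul_add, ih]; ring

theorem tet (n : ℕ) : 6 * ∑ s ∈ Finset.range n, ∑ d ∈ Finset.range (s + 1), (d + 1)
    = n * (n + 1) * (n + 2) := by
  induction n with
  | zero => simp
  | succ s ih =>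
    rw [Finset.sum_range_succ, mul_add, ih]
    have := tri s
    linarith

theorem pent (n : ℕ) : 24 * ∑ s ∈ Finset.range n, (∑ d ∈ Finset.range (s + 1), (d + 1)) * (n - s)
    = n * (n + 1) * (n + 2) * (n + 3) := by
  induction n with
  | zero => simp
  | succ m ih =>
    have h : ∑ s ∈ Finset.range (m + 1), (∑ d ∈ Finset.range (s + 1), (d + 1)) * (m + 1 - s)
        = ∑ s ∈ Finset.range m, (∑ d ∈ Finset.range (s + 1), (d + 1)) * (m - s)
          + ∑ s ∈ Finset.range (m + 1), ∑ d ∈ Finset.range (s + 1), (d + 1) := by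
      rw [Finset.sum_range_succ, Finset.sum_range_succ (fun s => ∑ d ∈ Finset.range (s + 1), (d + 1)),
        ← add_assoc, ← Finset.sum_add_distrib]
      congr 1
      · refine Finset.sum_congr rfl fun s hs => ?_
        have := Finset.mem_range.1 hs
        rw [show m + 1 - s = (m - s) + 1 by omega]
        ring
      · simp
    rw [h, mul_add, ih]
    have := tet (m + 1)
    linarith

theorem evens (m : ℕ) : ∑ s ∈ Finset.range (2 * m), ∑ d ∈ Finset.range (s + 1),
    (if d % 2 = 0 then 1 else 0) = m * (m + 1) := by
  have h1 : ∀ s : ℕ, ∑ d ∈ Finset.range (s + 1), (if d % 2 = 0 then 1 else 0) = s / 2 + 1 := by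
    intro s
    induction s with
    | zero => rfl
    | succ s ih =>
      rw [Finset.sum_range_succ, ih]
      split_ifs <;> omega
  simp only [h1]
  induction m with
  | zero => simp
  | succ m ih =>
    rw [show 2 * (m + 1) = 2 * m + 1 + 1 by ring, Finset.sum_range_succ, Finset.sum_range_succ, ih]
    rw [show (2 * m) / 2 = m by omega, show (2 * m + 1) / 2 = m by omega]
    ring

theorem row_flip (s : ℕ) (hs : s < n) (f : ℕ → ℕ) :
    ∑ r : Fin n, (if r.val ≤ s then f (s - r.val) else 0) = ∑ d ∈ Finset.range (s + 1), f d := by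
  rw [Fin.sum_univ_eq_sum_range (fun r => if r ≤ s then f (s - r) else 0) n, ← Finset.sum_filter,
    ← Finset.sum_flip]
  refine Finset.sum_congr ?_ fun _ _ => rfl
  ext r
  simp only [Finset.mem_filter, Finset.mem_range]
  omega

theorem Q_one_nat : Q (fun _ : Fin n × Fin n => 1) =
    ((∑ s ∈ Finset.range n, (∑ d ∈ Finset.range (s + 1), (d + 1)) * (n - s)
      + ∑ s ∈ Finset.range n, ∑ d ∈ Finset.range (s + 1), (if d % 2 = 0 then 1 else 0) : ℕ) : ZMod 2) := by
  unfold Q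
  simp only [mul_one, K_row]
  rw [Nat.cast_add]
  congr 1
  · rw [Fintype.sum_prod_type_right,
      ← Fin.sum_univ_eq_sum_range (fun s => (∑ d ∈ Finset.range (s + 1), (d + 1)) * (n - s)) n,
      Nat.cast_sum]
    refine Finset.sum_congr rfl fun s _ => ?_
    rw [← row_flip s.val s.isLt (fun d => d + 1), Nat.cast_mul, Nat.cast_sum, Finset.sum_mul]
    refine Finset.sum_congr rfl fun r _ => ?_
    congr 2
    dsimp only
    split_ifs <;> omega
  · rw [Fintype.sum_prod_type_right,
      ← Fin.sum_univ_eq_sum_range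
        (fun s => ∑ d ∈ Finset.range (s + 1), (if d % 2 = 0 then 1 else 0)) n,
      Nat.cast_sum]
    refine Finset.sum_congr rfl fun s _ => ?_
    rw [← row_flip s.val s.isLt (fun d => if d % 2 = 0 then 1 else 0), Nat.cast_sum]
    refine Finset.sum_congr rfl fun r _ => ?_
    unfold L
    dsimp only
    split_ifs <;> first | tauto | simp

theorem Q_one (h8 : n % 8 = 2 ∨ n % 8 = 4) : Q (fun _ : Fin n × Fin n => 1) = 1 := by
  rw [Q_one_nat]
  have hp := pent n
  have he := evens (n / 2)
  rw [show 2 * (n / 2) = n by omega] at he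
  rw [he]
  generalize ∑ s ∈ Finset.range n, (∑ d ∈ Finset.range (s + 1), (d + 1)) * (n - s) = A at hp
  have h2 : (n / 2 * (n / 2 + 1)) % 2 = 0 := Nat.even_iff.1 (Nat.even_mul_succ_self _)
  have hA : A % 2 = 1 := by
    rcases Nat.mod_two_eq_zero_or_one A with h | h
    · exfalso
      obtain ⟨a, rfl⟩ : ∃ a, A = 2 * a := ⟨A / 2, by omega⟩
      have hm : (n * (n + 1) * (n + 2) * (n + 3)) % 16 = 0 := by rw [← hp]; omega
      have hn : n % 16 = 2 ∨ n % 16 = 10 ∨ n % 16 = 4 ∨ n % 16 = 12 := by omega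
      rcases hn with hn | hn | hn | hn <;> simp [Nat.mul_mod, Nat.add_mod, hn] at hm
    · exact h
  have : (A + n / 2 * (n / 2 + 1)) % 2 = 1 % 2 := by omega
  have := (ZMod.natCast_eq_natCast_iff (A + n / 2 * (n / 2 + 1)) 1 2).2 this
  simpa using this

theorem main (heven : n % 2 = 0) (h8 : n % 8 = 2 ∨ n % 8 = 4)
    (M : Matrix (Fin n) (Fin n) (ZMod 2)) : ¬ InOrbit n M (iotaT n M) := by
  intro h
  obtain ⟨hQ, hH⟩ := inv_orbit _ _ h
  rw [Q_congr _ _ (iota_vec M), Q_add, Q_rev (vec M), Q_one h8] at hQ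
  have hHrev : ∀ k, H (Fin.rev k) (vec M) = H k (vec M) := by
    intro k
    rw [← hH k, H_congr k _ _ (iota_vec M), H_add, H_rev k (vec M), H_one heven, add_zero]
  have hB : ∑ c, vec M (revE c) * ∑ d, (K c d + K d c) * 1 = ∑ k, H k (vec M) := by
    rw [← Equiv.sum_comp Fin.revPerm (fun k => H k (vec M))]
    simp only [Fin.revPerm_apply, ← H_rev]
    simp only [K_both heven, H]
    rw [Finset.sum_comm]
    refine Finset.sum_congr rfl fun c _ => ?_
    rw [Finset.mul_sum]
    refine Finset.sum_congr rfl fun d _ => ?_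
    ring
  rw [hB, sum_H heven _ hHrev, add_zero] at hQ
  simp at hQ

end IotaAux

theorem iota_preserves_no_orbit (n : ℕ) (hn : 6 ≤ n) (heven : n % 2 = 0)
    (h8 : n % 8 = 2 ∨ n % 8 = 4)
    (M : Matrix (Fin n) (Fin n) (ZMod 2)) (hM : UpperTri n M) :
    ¬ InOrbit n M (iotaT n M) := by
  exact IotaAux.main heven h8 M
end
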